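/- arXiv:1601.08086 — 8 statements merged into one kernel-verified Lean document; each statement's English description precedes it below -/
import Mathlib

section
/- Let K be a field of characteristic p > 0, R = K[x_0, …, x_n], m = (x_0, …, x_n), and let f ∈ m. Then for every power q = p^e one has p·μ_f(q) − p + 1 ≤ μ_f(pq) ≤ p·μ_f(q); equivalently, μ_f(q) = ⌈μ_f(pq)/p⌉. -/
/-!
The key fact is that, in characteristic `p`, one has `g ∈ m^{[q]}` if and only if
`g ^ p ∈ m^{[pq]}` (`pow_char_mem_frobeniusPower_iff`). Indeed `m^{[q]}` is a monomial ideal, so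
membership depends only on the exponents occurring in `g`, and the exponents of `g ^ p` are
exactly those of `g` multiplied by `p`.

With `a = μ_f(q)` and `b = μ_f(pq)`, applying this to `g = f ^ a` gives `b ≤ p * a`. If moreover
`b ≤ p * (a - 1)` with `a ≥ 1`, then `(f ^ (a - 1)) ^ p ∈ m^{[pq]}`, hence
`f ^ (a - 1) ∈ m^{[q]}`, against the minimality of `a`. The formula with the ceiling is a
restatement of these two bounds.
-/

open MvPolynomial Filter Topology

/-- The Frobenius power `m^{[q]}` of the maximal ideal `m = (x_0, …, x_n)` of
`R = K[x_0, …, x_n]`, i.e. the ideal generated by `x_0^q, …, x_n^q`. -/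
noncomputable def frobeniusPower (K : Type*) [Field K] (n q : ℕ) :
    Ideal (MvPolynomial (Fin (n + 1)) K) :=
  Ideal.span (Set.range fun i : Fin (n + 1) => (X i : MvPolynomial (Fin (n + 1)) K) ^ q)

/-- `μ_f(q) = min {k ∈ ℕ : f^k ∈ m^{[q]}}`. -/
noncomputable def muF {K : Type*} [Field K] {n : ℕ}
    (f : MvPolynomial (Fin (n + 1)) K) (q : ℕ) : ℕ :=
  sInf {k : ℕ | f ^ k ∈ frobeniusPower K n q}

/-- `f` has an isolated singularity: its partial derivatives `∂f/∂x_0, …, ∂f/∂x_n`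
form a regular sequence in `R`. -/
def HasIsolatedSingularity {K : Type*} [Field K] {n : ℕ}
    (f : MvPolynomial (Fin (n + 1)) K) : Prop :=
  RingTheory.Sequence.IsRegular (MvPolynomial (Fin (n + 1)) K)
    ((List.finRange (n + 1)).map fun i => MvPolynomial.pderiv i f)

/-- `fpt(f) = c`: the sequence `μ_f(p^e)/p^e` converges to `c`. -/
def HasFpt {K : Type*} [Field K] {n : ℕ} (p : ℕ)
    (f : MvPolynomial (Fin (n + 1)) K) (c : ℝ) : Prop :=
  Tendsto (fun e : ℕ => (muF f (p ^ e) : ℝ) / ((p : ℝ) ^ e)) atTop (𝓝 c)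

/-- Membership in the monomial ideal `m^{[q]}` is tested on the monomials of `g`. -/
theorem mem_frobeniusPower_iff {K : Type*} [Field K] {n q : ℕ}
    {g : MvPolynomial (Fin (n + 1)) K} :
    g ∈ frobeniusPower K n q ↔ ∀ d ∈ g.support, ∃ i, q ≤ d i := by
  have h : frobeniusPower K n q = Ideal.span
      ((fun s => monomial s (1 : K)) '' Set.range fun i : Fin (n + 1) => Finsupp.single i q) := by
    rw [frobeniusPower, ← Set.range_comp]
    simp only [Function.comp_def, X_pow_eq_monomial]
  rw [h, mem_ideal_span_monomial_image]
  simp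

/-- The exponents of `g ^ p` are exactly `p` times those of `g`, as `g ^ p` is obtained from `g`
by raising all coefficients and all variables to the `p`-th power. -/
theorem mem_support_pow_char_iff {K : Type*} [Field K] {p : ℕ} [Fact p.Prime] [CharP K p]
    {σ : Type*} (g : MvPolynomial σ K) (d : σ →₀ ℕ) :
    d ∈ (g ^ p).support ↔ ∃ c ∈ g.support, p • c = d := by
  classical
  have hp : p ≠ 0 := (Fact.out : p.Prime).ne_zero
  rw [← map_frobenius_expand p, support_map_of_injective _ (frobenius_inj K p),
    support_expand _ hp]
  simp

/-- Flatness of Frobenius for monomial ideals: `g ∈ m^{[q]}` can be tested after taking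
`p`-th powers. -/
theorem pow_char_mem_frobeniusPower_iff {K : Type*} [Field K] {p : ℕ} [Fact p.Prime] [CharP K p]
    {n q : ℕ} {g : MvPolynomial (Fin (n + 1)) K} :
    g ^ p ∈ frobeniusPower K n (p * q) ↔ g ∈ frobeniusPower K n q := by
  have hp : 0 < p := (Fact.out : p.Prime).pos
  simp only [mem_frobeniusPower_iff, mem_support_pow_char_iff]
  constructor
  · intro h d hd
    obtain ⟨i, hi⟩ := h _ ⟨d, hd, rfl⟩
    exact ⟨i, Nat.le_of_mul_le_mul_left (by simpa using hi) hp⟩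
  · rintro h _ ⟨d, hd, rfl⟩
    obtain ⟨i, hi⟩ := h d hd
    exact ⟨i, by simpa using Nat.mul_le_mul_left p hi⟩

theorem pow_mem_frobeniusPower {K : Type*} [Field K] {p : ℕ} [Fact p.Prime] [CharP K p] {n : ℕ}
    {f : MvPolynomial (Fin (n + 1)) K}
    (hf : f ∈ Ideal.span (Set.range (X : Fin (n + 1) → MvPolynomial (Fin (n + 1)) K)))
    (e : ℕ) : f ^ p ^ e ∈ frobeniusPower K n (p ^ e) := by
  induction e with
  | zero => simpa [frobeniusPower] using hf
  | succ e ih =>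
    rw [pow_succ' p e, mul_comm p, pow_mul, mul_comm _ p]
    exact pow_char_mem_frobeniusPower_iff.2 ih

/-- for `f ∈ m` and `q = p^e`, one has
`p·μ_f(q) − p + 1 ≤ μ_f(pq) ≤ p·μ_f(q)`, equivalently `μ_f(q) = ⌈μ_f(pq)/p⌉`. -/
theorem statement0 {K : Type*} [Field K] {p : ℕ} [Fact p.Prime] [CharP K p] {n : ℕ}
    (f : MvPolynomial (Fin (n + 1)) K)
    (hf : f ∈ Ideal.span (Set.range (X : Fin (n + 1) → MvPolynomial (Fin (n + 1)) K)))
    (e : ℕ) :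
    (p * muF f (p ^ e) + 1 ≤ muF f (p * p ^ e) + p ∧
      muF f (p * p ^ e) ≤ p * muF f (p ^ e)) ∧
    (muF f (p ^ e) : ℤ) = ⌈(muF f (p * p ^ e) : ℚ) / (p : ℚ)⌉ := by
  have hp : 0 < p := (Fact.out : p.Prime).pos
  -- Both sets defining `μ_f` are nonempty, so the infima are attained.
  have ha : f ^ muF f (p ^ e) ∈ frobeniusPower K n (p ^ e) :=
    Nat.sInf_mem (s := {k | f ^ k ∈ frobeniusPower K n (p ^ e)})
      ⟨p ^ e, pow_mem_frobeniusPower hf e⟩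
  have hb : f ^ muF f (p * p ^ e) ∈ frobeniusPower K n (p * p ^ e) :=
    Nat.sInf_mem (s := {k | f ^ k ∈ frobeniusPower K n (p * p ^ e)})
      ⟨p ^ (e + 1), by
        have h := pow_mem_frobeniusPower (p := p) hf (e + 1)
        rwa [pow_succ' p e] at h ⊢⟩
  have hmin : ∀ k, f ^ k ∈ frobeniusPower K n (p ^ e) → muF f (p ^ e) ≤ k :=
    fun k hk => Nat.sInf_le hk
  have hupper : muF f (p * p ^ e) ≤ p * muF f (p ^ e) := by
    have h : (f ^ muF f (p ^ e)) ^ p ∈ frobeniusPower K n (p * p ^ e) :=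
      pow_char_mem_frobeniusPower_iff.2 ha
    rw [← pow_mul, mul_comm (muF f (p ^ e)) p] at h
    exact Nat.sInf_le h
  generalize muF f (p * p ^ e) = b at *
  generalize muF f (p ^ e) = a at *
  have hlower : p * a + 1 ≤ b + p := by
    rcases a with _ | a
    · omega
    by_contra hlt
    have hle : b ≤ a * p := by nlinarith
    have hmem : (f ^ a) ^ p ∈ frobeniusPower K n (p * p ^ e) := by
      rw [← pow_mul]
      exact Ideal.mem_of_dvd _ (pow_dvd_pow f hle) hb
    have := hmin a (pow_char_mem_frobeniusPower_iff.1 hmem)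
    omega
  refine ⟨⟨hlower, hupper⟩, ?_⟩
  have hpQ : (0 : ℚ) < p := by exact_mod_cast hp
  have hlowerQ : (p : ℚ) * a + 1 ≤ b + p := by exact_mod_cast hlower
  have hupperQ : (b : ℚ) ≤ p * a := by exact_mod_cast hupper
  symm
  rw [Int.ceil_eq_iff, lt_div_iff₀ hpQ, div_le_iff₀ hpQ]
  push_cast
  constructor <;> linarith
end

section
/- Let K be a field of characteristic p > 0, R = K[x_0, …, x_n], m = (x_0, …, x_n), and let f ∈ m. Then the sequence e ↦ μ_f(p^e)/p^e (e ≥ 0) is a non-increasing sequence of positive rational numbers; in particular the limit fpt(f) = lim_{e→∞} μ_f(p^e)/p^e exists. -/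
/-!
The Frobenius map sends `m^{[q]}` into `m^{[qp]}` (`pow_char_mem_frobeniusPower`). Hence
`f ^ k ∈ m^{[q]}` implies `f ^ (k * p) ∈ m^{[qp]}`, that is `μ_f(qp) ≤ p * μ_f(q)`, which is
monotonicity of `μ_f(p^e) / p^e`. Starting from `f ∈ m = m^{[1]}` the same fact shows
`f ^ (p ^ e) ∈ m^{[p^e]}`, so the minima exist (`pow_muF_mem`). They are positive because
`m^{[q]}` is a proper ideal (`one_notMem_frobeniusPower`). An antitone sequence bounded below
by `0` converges.
-/

open MvPolynomial Filter Topology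

/-- Frobenius sends `m^{[q]}` into `m^{[qp]}`. -/
lemma pow_char_mem_frobeniusPower {K : Type*} [Field K] {p : ℕ} [Fact p.Prime] [CharP K p]
    {n q : ℕ} {g : MvPolynomial (Fin (n + 1)) K} (hg : g ∈ frobeniusPower K n q) :
    g ^ p ∈ frobeniusPower K n (q * p) := by
  have hle : frobeniusPower K n q ≤ (frobeniusPower K n (q * p)).comap
      (frobenius (MvPolynomial (Fin (n + 1)) K) p) := by
    rw [frobeniusPower, Ideal.span_le]
    rintro _ ⟨i, rfl⟩
    simp only [SetLike.mem_coe, Ideal.mem_comap, frobenius_def, ← pow_mul]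
    exact Ideal.subset_span ⟨i, rfl⟩
  exact hle hg

/-- For `q > 0` every element of `m^{[q]}` has zero constant term, so `m^{[q]}` is proper. -/
lemma one_notMem_frobeniusPower {K : Type*} [Field K] {n q : ℕ} (hq : q ≠ 0) :
    (1 : MvPolynomial (Fin (n + 1)) K) ∉ frobeniusPower K n q := by
  intro h
  have hle : frobeniusPower K n q ≤
      RingHom.ker (constantCoeff : MvPolynomial (Fin (n + 1)) K →+* K) := by
    rw [frobeniusPower, Ideal.span_le]
    rintro _ ⟨i, rfl⟩
    simp [RingHom.mem_ker, hq]
  have := hle h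
  simp [RingHom.mem_ker] at this

/-- For `f ∈ m` the set defining `μ_f(p^e)` is nonempty, so the infimum is a minimum. -/
lemma pow_muF_mem {K : Type*} [Field K] {p : ℕ} [Fact p.Prime] [CharP K p] {n : ℕ}
    {f : MvPolynomial (Fin (n + 1)) K}
    (hf : f ∈ Ideal.span (Set.range (X : Fin (n + 1) → MvPolynomial (Fin (n + 1)) K)))
    (e : ℕ) : f ^ muF f (p ^ e) ∈ frobeniusPower K n (p ^ e) := by
  have hmem : ∀ e : ℕ, f ^ p ^ e ∈ frobeniusPower K n (p ^ e) := by
    intro e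
    induction e with
    | zero => simpa [frobeniusPower] using hf
    | succ e ih => simpa only [pow_succ, pow_mul] using pow_char_mem_frobeniusPower (p := p) ih
  exact Nat.sInf_mem (s := {k : ℕ | f ^ k ∈ frobeniusPower K n (p ^ e)}) ⟨p ^ e, hmem e⟩

/-- for `f ∈ m`, the sequence `e ↦ μ_f(p^e)/p^e` is a non-increasing
sequence of positive rational numbers; in particular the limit
`fpt(f) = lim_{e→∞} μ_f(p^e)/p^e` exists. -/
theorem statement1 {K : Type*} [Field K] {p : ℕ} [Fact p.Prime] [CharP K p] {n : ℕ}
    (f : MvPolynomial (Fin (n + 1)) K)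
    (hf : f ∈ Ideal.span (Set.range (X : Fin (n + 1) → MvPolynomial (Fin (n + 1)) K))) :
    (∀ e : ℕ, 0 < (muF f (p ^ e) : ℚ) / ((p : ℚ) ^ e)) ∧
    (Antitone fun e : ℕ => (muF f (p ^ e) : ℚ) / ((p : ℚ) ^ e)) ∧
    ∃ c : ℝ, HasFpt p f c := by
  have hp : 0 < p := (Fact.out : p.Prime).pos
  have hpos : ∀ e : ℕ, 0 < muF f (p ^ e) := by
    intro e
    rw [Nat.pos_iff_ne_zero]
    intro h0
    have h := pow_muF_mem (p := p) hf e
    rw [h0, pow_zero] at h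
    exact one_notMem_frobeniusPower (pow_pos hp e).ne' h
  have hstep : ∀ e : ℕ, muF f (p ^ (e + 1)) ≤ muF f (p ^ e) * p := by
    intro e
    have h := pow_char_mem_frobeniusPower (p := p) (pow_muF_mem (p := p) hf e)
    rw [← pow_mul, ← pow_succ] at h
    exact Nat.sInf_le h
  have hanti : Antitone fun e : ℕ => (muF f (p ^ e) : ℚ) / ((p : ℚ) ^ e) := by
    refine antitone_nat_of_succ_le fun e => ?_
    have hp' : (0 : ℚ) < p := by exact_mod_cast hp
    rw [div_le_div_iff₀ (by positivity) (by positivity), pow_succ]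
    have h : (muF f (p ^ (e + 1)) : ℚ) ≤ muF f (p ^ e) * p := by exact_mod_cast hstep e
    calc (muF f (p ^ (e + 1)) : ℚ) * (p : ℚ) ^ e ≤ (muF f (p ^ e) * p) * (p : ℚ) ^ e := by gcongr
      _ = _ := by ring
  refine ⟨fun e => ?_, hanti, ?_⟩
  · have h1 : (0 : ℚ) < muF f (p ^ e) := by exact_mod_cast hpos e
    have hp' : (0 : ℚ) < p := by exact_mod_cast hp
    positivity
  · have hantiR : Antitone fun e : ℕ => (muF f (p ^ e) : ℝ) / ((p : ℝ) ^ e) := by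
      intro a b hab
      have h : (((muF f (p ^ b) : ℚ) / ((p : ℚ) ^ b) : ℚ) : ℝ) ≤
          (((muF f (p ^ a) : ℚ) / ((p : ℚ) ^ a) : ℚ) : ℝ) := Rat.cast_le.mpr (hanti hab)
      simpa using h
    refine ⟨_, tendsto_atTop_ciInf hantiR ⟨0, ?_⟩⟩
    rintro _ ⟨e, rfl⟩
    positivity
end

section
/- Let f ∈ R = K[x_0, …, x_n] be a quasi-homogeneous polynomial of degree d and type α = (α_0, …, α_n) with an isolated singularity. Then every quasi-homogeneous polynomial of weighted degree at least (n+1)d − 2w + 1 lies in the Jacobian ideal J(f); that is, R_{≥ (n+1)d−2w+1} ⊆ J(f), where w = α_0 + ⋯ + α_n. -/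
/-!
The proof compares Hilbert series. The partial derivatives `∂f/∂x_i` are quasi-homogeneous of degree
`d - α_i` and form a regular sequence, and adding to a homogeneous ideal `I` a form `g` of degree `e`
that is a nonzerodivisor modulo `I` multiplies the Hilbert series of `R / I` by `1 - t^e`
(`hilbertFn_sup_span_singleton`). Applied to the partial derivatives and, with quotient `K`, to the
variables, this gives for the Hilbert series `H` of `R / J(f)`
  `H · ∏ (1 - t^{α_i}) = ∏ (1 - t^{d - α_i})`.

Both products have `n + 1` factors, so cancelling `(1 - t)^{n+1}` leaves
  `H · ∏ (1 + ⋯ + t^{α_i - 1}) = ∏ (1 + ⋯ + t^{d - α_i - 1})`.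
The series `H` and the factors beside it have nonnegative coefficients, and the product beside `H` has
the term `t^{∑ (α_i - 1)}`. A nonzero coefficient of `H` in degree `k` would therefore yield a nonzero
coefficient on the right in degree `k + ∑ (α_i - 1)`, which forces
`k ≤ ∑ (d - 2 α_i) = (n + 1) d - 2 w` (`coeff_eq_zero_of_mul_prod_eq`). No separate argument that
`R / J(f)` is finite-dimensional is needed. In larger degrees `J(f)` contains all of `R_k`.
-/

open MvPolynomial Filter Topology

/-- `R_{≥ N}`: the span of all monomials of weighted degree at least `N`
(for weights `α`). -/
noncomputable def Rge (K : Type*) [Field K] (n : ℕ) (α : Fin (n + 1) → ℕ) (N : ℤ) :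
    Submodule K (MvPolynomial (Fin (n + 1)) K) :=
  Submodule.span K {g | ∃ k : Fin (n + 1) →₀ ℕ,
    g = monomial k (1 : K) ∧ N ≤ ∑ i, (α i : ℤ) * (k i : ℤ)}

/-- The Jacobian ideal `J(f) = (∂f/∂x_0, …, ∂f/∂x_n)`. -/
noncomputable def jacobianIdeal {K : Type*} [Field K] {n : ℕ}
    (f : MvPolynomial (Fin (n + 1)) K) : Ideal (MvPolynomial (Fin (n + 1)) K) :=
  Ideal.span (Set.range fun i : Fin (n + 1) => MvPolynomial.pderiv i f)

/-! ### Hilbert functions of homogeneous ideals -/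

section Hilbert

variable {σ : Type*} {K : Type*} [Field K] (α : σ → ℕ)

/-- The degree `k` part `I_k = I ∩ R_k` of an ideal `I`, as a `K`-subspace of `R`. -/
noncomputable def degreePart (I : Ideal (MvPolynomial σ K)) (k : ℕ) :
    Submodule K (MvPolynomial σ K) :=
  I.restrictScalars K ⊓ weightedHomogeneousSubmodule K α k

/-- The Hilbert function of `R / I`, computed as `dim R_k - dim I_k`. -/
noncomputable def hilbertFn (I : Ideal (MvPolynomial σ K)) (k : ℕ) : ℤ :=
  (Module.finrank K (weightedHomogeneousSubmodule K α k) : ℤ) -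
    Module.finrank K (degreePart α I k)

/-- The Hilbert series of `R / I`. -/
noncomputable def quotHilbertSeries (I : Ideal (MvPolynomial σ K)) : PowerSeries ℤ :=
  PowerSeries.mk (hilbertFn α I)

variable {α}

lemma mem_degreePart {I : Ideal (MvPolynomial σ K)} {k : ℕ} {a : MvPolynomial σ K} :
    a ∈ degreePart α I k ↔ a ∈ I ∧ a.IsWeightedHomogeneous α k := by
  simp [degreePart, mem_weightedHomogeneousSubmodule]

lemma component_mem_span {s : Set (MvPolynomial σ K)}
    (hs : ∀ x ∈ s, ∃ e, x.IsWeightedHomogeneous α e) {a : MvPolynomial σ K}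
    (ha : a ∈ Ideal.span s) (k : ℕ) :
    weightedHomogeneousComponent α k a ∈ Ideal.span s := by
  let := weightedGradedAlgebra K α
  exact weightedHomogeneousComponent_mem_of_mem K α (Ideal.homogeneous_span _ s hs) ha k

lemma component_mul_of_le {g : MvPolynomial σ K} {e k : ℕ} (hg : g.IsWeightedHomogeneous α e)
    (h : e ≤ k) (b : MvPolynomial σ K) :
    weightedHomogeneousComponent α k (g * b) =
      g * weightedHomogeneousComponent α (k - e) b := by
  let := weightedGradedAlgebra K α
  rw [← weightedDecomposition.decompose'_apply, ← weightedDecomposition.decompose'_apply]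
  exact DirectSum.coe_decompose_mul_of_left_mem_of_le _ hg h

lemma component_mul_of_not_le {g : MvPolynomial σ K} {e k : ℕ}
    (hg : g.IsWeightedHomogeneous α e) (h : ¬ e ≤ k) (b : MvPolynomial σ K) :
    weightedHomogeneousComponent α k (g * b) = 0 := by
  let := weightedGradedAlgebra K α
  rw [← weightedDecomposition.decompose'_apply]
  exact DirectSum.coe_decompose_mul_of_left_mem_of_not_le _ hg h

lemma finiteDimensional_homogeneous [Finite σ] (hα : ∀ i, 0 < α i) (k : ℕ) :
    FiniteDimensional K (weightedHomogeneousSubmodule K α k) :=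
  Module.Finite.iff_fg.mpr (weightedHomogeneousSubmodule_fg K α (fun i => (hα i).ne') k)

lemma finiteDimensional_degreePart [Finite σ] (hα : ∀ i, 0 < α i)
    (I : Ideal (MvPolynomial σ K)) (k : ℕ) : FiniteDimensional K (degreePart α I k) := by
  have := finiteDimensional_homogeneous (K := K) hα k
  exact Submodule.finiteDimensional_of_le inf_le_right

lemma hilbertFn_nonneg [Finite σ] (hα : ∀ i, 0 < α i) (I : Ideal (MvPolynomial σ K)) (k : ℕ) :
    0 ≤ hilbertFn α I k := by
  have := finiteDimensional_homogeneous (K := K) hα k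
  have hle : degreePart α I k ≤ weightedHomogeneousSubmodule K α k := inf_le_right
  have h := Submodule.finrank_mono hle
  unfold hilbertFn
  omega

lemma mem_of_hilbertFn_eq_zero [Finite σ] (hα : ∀ i, 0 < α i) {I : Ideal (MvPolynomial σ K)}
    {k : ℕ} (h : hilbertFn α I k = 0) {a : MvPolynomial σ K}
    (ha : a.IsWeightedHomogeneous α k) : a ∈ I := by
  have := finiteDimensional_homogeneous (K := K) hα k
  have hle : degreePart α I k ≤ weightedHomogeneousSubmodule K α k := inf_le_right
  have heq := Submodule.eq_of_le_of_finrank_eq hle (by unfold hilbertFn at h; omega)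
  have hmem : a ∈ degreePart α I k := heq ▸ ha
  exact (mem_degreePart.mp hmem).1

/-- In degree `k ≥ e` one has `(I + (g))_k = I_k + g R_{k-e}`, the sum of two spaces that meet in
`g I_{k-e}` when `g` is a nonzerodivisor modulo `I`. In degree `k < e` nothing changes. -/
lemma hilbertFn_sup_span_singleton [Finite σ] (hα : ∀ i, 0 < α i)
    {s : Set (MvPolynomial σ K)} (hs : ∀ x ∈ s, ∃ e, x.IsWeightedHomogeneous α e)
    {g : MvPolynomial σ K} {e : ℕ} (hg : g.IsWeightedHomogeneous α e) (hg0 : g ≠ 0)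
    (hreg : ∀ a, g * a ∈ Ideal.span s → a ∈ Ideal.span s) (k : ℕ) :
    hilbertFn α (Ideal.span s ⊔ Ideal.span {g}) k =
      hilbertFn α (Ideal.span s) k -
        if e ≤ k then hilbertFn α (Ideal.span s) (k - e) else 0 := by
  have hdecomp : ∀ a ∈ degreePart α (Ideal.span s ⊔ Ideal.span {g}) k, ∃ b c,
      b ∈ Ideal.span s ∧ b.IsWeightedHomogeneous α k ∧
        a = b + weightedHomogeneousComponent α k (g * c) := by
    intro a ha
    obtain ⟨ha, hak⟩ := mem_degreePart.mp ha
    obtain ⟨b, hb, y, hy, rfl⟩ := Submodule.mem_sup.mp ha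
    obtain ⟨c, rfl⟩ := Ideal.mem_span_singleton'.mp hy
    refine ⟨weightedHomogeneousComponent α k b, c, component_mem_span hs hb k,
      weightedHomogeneousComponent_isWeightedHomogeneous _ _, ?_⟩
    rw [mul_comm g c, ← map_add]
    exact hak.weightedHomogeneousComponent_same.symm
  split_ifs with hk
  · have := finiteDimensional_homogeneous (K := K) hα (k - e)
    have := finiteDimensional_degreePart hα (Ideal.span s) k
    let m : MvPolynomial σ K →ₗ[K] MvPolynomial σ K := LinearMap.mulLeft K g
    have hm : Function.Injective m := fun a b hab => mul_left_cancel₀ hg0 hab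
    have hsup : degreePart α (Ideal.span s ⊔ Ideal.span {g}) k =
        degreePart α (Ideal.span s) k ⊔
          (weightedHomogeneousSubmodule K α (k - e)).map m := by
      apply le_antisymm
      · intro a ha
        obtain ⟨b, c, hb, hbk, rfl⟩ := hdecomp a ha
        rw [component_mul_of_le hg hk]
        exact Submodule.add_mem_sup (mem_degreePart.mpr ⟨hb, hbk⟩)
          (Submodule.mem_map_of_mem (weightedHomogeneousComponent_mem _ _ _))
      · refine sup_le ?_ ?_
        · intro a ha
          obtain ⟨h1, h2⟩ := mem_degreePart.mp ha
          exact mem_degreePart.mpr ⟨Ideal.mem_sup_left h1, h2⟩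
        · rintro _ ⟨b, hb, rfl⟩
          refine mem_degreePart.mpr ⟨Ideal.mem_sup_right
            (Ideal.mul_mem_right _ _ (Ideal.mem_span_singleton_self g)), ?_⟩
          have := hg.mul (show b.IsWeightedHomogeneous α (k - e) from hb)
          rwa [Nat.add_sub_cancel' hk] at this
    have hinf : degreePart α (Ideal.span s) k ⊓
          (weightedHomogeneousSubmodule K α (k - e)).map m =
        (degreePart α (Ideal.span s) (k - e)).map m := by
      ext a
      constructor
      · rintro ⟨ha, b, hb, rfl⟩
        exact ⟨b, mem_degreePart.mpr ⟨hreg b (mem_degreePart.mp ha).1, hb⟩, rfl⟩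
      · rintro ⟨b, hb, rfl⟩
        obtain ⟨h1, h2⟩ := mem_degreePart.mp hb
        refine ⟨mem_degreePart.mpr ⟨Ideal.mul_mem_left _ _ h1, ?_⟩, b, h2, rfl⟩
        have := hg.mul h2
        rwa [Nat.add_sub_cancel' hk] at this
    have hdim := Submodule.finrank_sup_add_finrank_inf_eq (degreePart α (Ideal.span s) k)
      ((weightedHomogeneousSubmodule K α (k - e)).map m)
    rw [← hsup, hinf, ← (Submodule.equivMapOfInjective m hm _).finrank_eq,
      ← (Submodule.equivMapOfInjective m hm _).finrank_eq] at hdim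
    unfold hilbertFn
    omega
  · have heq : degreePart α (Ideal.span s ⊔ Ideal.span {g}) k = degreePart α (Ideal.span s) k := by
      ext a
      constructor
      · intro ha
        obtain ⟨b, c, hb, hbk, rfl⟩ := hdecomp a ha
        rw [component_mul_of_not_le hg hk, add_zero]
        exact mem_degreePart.mpr ⟨hb, hbk⟩
      · intro ha
        obtain ⟨h1, h2⟩ := mem_degreePart.mp ha
        exact mem_degreePart.mpr ⟨Ideal.mem_sup_left h1, h2⟩
    unfold hilbertFn
    rw [heq, sub_zero]

/-- The Hilbert series of the quotient by a regular sequence of homogeneous elements. Regularity is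
required for each member `g i` modulo the ideal of the members before it in the list. -/
lemma quotHilbertSeries_ofList {ι : Type*} [Finite σ] (hα : ∀ i, 0 < α i)
    {g : ι → MvPolynomial σ K} {e : ι → ℕ}
    (hg : ∀ i, (g i).IsWeightedHomogeneous α (e i)) (hg0 : ∀ i, g i ≠ 0) (l : List ι)
    (hreg : ∀ l₁ i, l₁ ++ [i] <+: l → ∀ a, g i * a ∈ Ideal.ofList (l₁.map g) →
      a ∈ Ideal.ofList (l₁.map g)) :
    quotHilbertSeries α (Ideal.ofList (l.map g)) =
      (l.map fun i => (1 - PowerSeries.X ^ e i : PowerSeries ℤ)).prod *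
        quotHilbertSeries α (⊥ : Ideal (MvPolynomial σ K)) := by
  induction l using List.reverseRecOn with
  | nil => simp
  | append_singleton l i ih =>
    have ih := ih fun l₁ j h => hreg l₁ j (h.trans (List.prefix_append _ _))
    have hstep : quotHilbertSeries α (Ideal.ofList ((l ++ [i]).map g)) =
        (1 - PowerSeries.X ^ e i) * quotHilbertSeries α (Ideal.ofList (l.map g)) := by
      ext k
      rw [sub_mul, one_mul, map_sub, PowerSeries.coeff_X_pow_mul', List.map_append,
        Ideal.ofList_append, List.map_singleton, Ideal.ofList_singleton]
      simp only [quotHilbertSeries, PowerSeries.coeff_mk]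
      refine hilbertFn_sup_span_singleton hα ?_ (hg i) (hg0 i) (hreg l i List.prefix_rfl) k
      intro x hx
      obtain ⟨j, -, rfl⟩ := List.mem_map.mp hx
      exact ⟨e j, hg j⟩
    rw [hstep, ih, List.map_append, List.prod_append]
    simp
    ring

end Hilbert

/-! ### The Hilbert series of the polynomial ring -/

section Variables

variable {K : Type*} [Field K] {m : ℕ} {α : Fin m → ℕ}

lemma X_mul_mem_ofList {σ : Type*} {l : List σ} {i : σ} (hi : i ∉ l) (a : MvPolynomial σ K)
    (ha : X i * a ∈ Ideal.ofList (l.map (X : σ → MvPolynomial σ K))) :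
    a ∈ Ideal.ofList (l.map (X : σ → MvPolynomial σ K)) := by
  have hset : {r | r ∈ l.map (X : σ → MvPolynomial σ K)} = X '' {j | j ∈ l} := by
    ext; simp
  unfold Ideal.ofList at ha ⊢
  rw [hset, mem_ideal_span_X_image] at ha ⊢
  intro k hk
  obtain ⟨j, hj, hne⟩ := ha (Finsupp.single i 1 + k) (by
    rw [mem_support_iff, coeff_X_mul]
    exact mem_support_iff.mp hk)
  refine ⟨j, hj, ?_⟩
  have hij : i ≠ j := fun h => hi (h ▸ hj)
  simpa [Finsupp.single_apply, hij] using hne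

/-- The variables themselves form a regular sequence with quotient `K`, which determines the
Hilbert series of the polynomial ring. -/
lemma prod_mul_quotHilbertSeries_bot (hα : ∀ i, 0 < α i) :
    (∏ i, (1 - PowerSeries.X ^ α i : PowerSeries ℤ)) *
      quotHilbertSeries α (⊥ : Ideal (MvPolynomial (Fin m) K)) = 1 := by
  have h := quotHilbertSeries_ofList (K := K) hα (g := X) (e := α)
    (fun i => isWeightedHomogeneous_X K α i) (fun i => X_ne_zero i) (List.finRange m) (by
      intro l₁ i hpre a ha
      refine X_mul_mem_ofList ?_ a ha
      have hnd := (List.nodup_finRange m).sublist hpre.sublist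
      have := List.nodup_append.mp hnd
      intro hi
      exact this.2.2 i hi i (by simp) rfl)
  rw [← List.prod_ofFn, List.ofFn_eq_map, ← h]
  have hset : {r | r ∈ (List.finRange m).map (X : Fin m → MvPolynomial (Fin m) K)} =
      X '' Set.univ := by
    ext; simp
  have hmem : ∀ x : MvPolynomial (Fin m) K, x ∈ Ideal.ofList ((List.finRange m).map X) ↔
      ∀ k ∈ x.support, ∃ i, k i ≠ 0 := by
    intro x
    unfold Ideal.ofList
    rw [hset, mem_ideal_span_X_image]
    simp
  have hw0 : ∀ k : Fin m →₀ ℕ, Finsupp.weight α k = 0 ↔ k = 0 := fun k => by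
    rw [weightedDegree_eq_zero_iff (nonTorsionWeight_of fun i => (hα i).ne'), Finsupp.ext_iff]
    rfl
  ext k
  rw [quotHilbertSeries, PowerSeries.coeff_mk, PowerSeries.coeff_one]
  have := finiteDimensional_homogeneous (K := K) hα k
  split_ifs with hk
  · subst hk
    have hbot : degreePart α (Ideal.ofList ((List.finRange m).map X)) 0 =
        (⊥ : Submodule K (MvPolynomial (Fin m) K)) := by
      rw [eq_bot_iff]
      intro a ha
      obtain ⟨h1, h2⟩ := mem_degreePart.mp ha
      rw [Submodule.mem_bot]
      by_contra hne
      obtain ⟨k, hk⟩ := support_nonempty.mpr hne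
      obtain ⟨i, hi⟩ := (hmem a).mp h1 k hk
      exact hi (by rw [(hw0 k).mp (h2 (mem_support_iff.mp hk))]; rfl)
    have hone : weightedHomogeneousSubmodule K α 0 = Submodule.span K {1} := by
      apply le_antisymm
      · intro a ha
        have hc : a = C (coeff 0 a) := by
          ext k
          rw [coeff_C]
          split_ifs with hk
          · rw [hk]
          · by_contra hne
            exact hk ((hw0 k).mp (ha hne)).symm
        rw [hc, Submodule.mem_span_singleton]
        exact ⟨coeff 0 a, by rw [smul_eq_C_mul, mul_one]⟩
      · rw [Submodule.span_le, Set.singleton_subset_iff]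
        exact isWeightedHomogeneous_one K α
    unfold hilbertFn
    rw [hbot, hone, finrank_span_singleton one_ne_zero]
    simp
  · have heq : degreePart α (Ideal.ofList ((List.finRange m).map X)) k =
        weightedHomogeneousSubmodule K α k := by
      refine le_antisymm inf_le_right fun a ha => mem_degreePart.mpr ⟨(hmem a).mpr ?_, ha⟩
      intro v hv
      by_contra! hzero
      have hv0 : v = 0 := Finsupp.ext hzero
      exact hk ((ha (mem_support_iff.mp hv)).symm.trans ((hw0 v).mpr hv0))
    unfold hilbertFn
    rw [heq, sub_self]

end Variables

/-! ### Products of truncated geometric series -/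

section Geometric

/-- The truncated geometric series `1 + t + ⋯ + t^{a-1}`. -/
noncomputable def truncGeom (a : ℕ) : PowerSeries ℤ :=
  ∑ j ∈ Finset.range a, PowerSeries.X ^ j

lemma coeff_mul_truncGeom (A : PowerSeries ℤ) (a k : ℕ) :
    PowerSeries.coeff k (A * truncGeom a) =
      ∑ j ∈ Finset.range a, if j ≤ k then PowerSeries.coeff (k - j) A else 0 := by
  simp [PowerSeries.coeff_mul_X_pow', truncGeom, Finset.mul_sum]

/-- The product has nonnegative coefficients and top term `t^{∑ (a i - 1)}`, so each coefficient of
a nonnegative series `A` survives, shifted, in the product with `A`. -/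
lemma coeff_le_coeff_mul_prod {ι : Type*} (s : Finset ι) {a : ι → ℕ} (ha : ∀ i, 0 < a i)
    {A : PowerSeries ℤ} (hA : ∀ k, 0 ≤ PowerSeries.coeff k A) :
    (∀ k, 0 ≤ PowerSeries.coeff k (A * ∏ i ∈ s, truncGeom (a i))) ∧
      ∀ k, PowerSeries.coeff k A ≤
        PowerSeries.coeff (k + ∑ i ∈ s, (a i - 1)) (A * ∏ i ∈ s, truncGeom (a i)) := by
  classical
  induction s using Finset.induction_on with
  | empty => simpa using hA
  | insert i s hi ih =>
    obtain ⟨ih1, ih2⟩ := ih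
    rw [Finset.prod_insert hi, Finset.sum_insert hi, mul_left_comm, mul_comm (truncGeom _)]
    constructor
    · intro k
      rw [coeff_mul_truncGeom]
      exact Finset.sum_nonneg fun j _ => by split_ifs <;> simp [ih1]
    · intro k
      rw [coeff_mul_truncGeom]
      refine (ih2 k).trans ?_
      have hle := Finset.single_le_sum (s := Finset.range (a i))
        (f := fun j => if j ≤ k + (a i - 1 + ∑ i ∈ s, (a i - 1)) then
          PowerSeries.coeff (k + (a i - 1 + ∑ i ∈ s, (a i - 1)) - j)
            (A * ∏ i ∈ s, truncGeom (a i)) else 0)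
        (fun j _ => by split_ifs <;> simp [ih1])
        (Finset.mem_range.mpr (Nat.sub_lt (ha i) one_pos))
      refine le_trans (le_of_eq ?_) hle
      rw [if_pos (by omega)]
      congr 2
      omega

lemma coeff_prod_truncGeom_eq_zero {ι : Type*} (s : Finset ι) (e : ι → ℕ) (k : ℕ)
    (hk : ∑ i ∈ s, ((e i : ℤ) - 1) < k) :
    PowerSeries.coeff k (∏ i ∈ s, truncGeom (e i)) = 0 := by
  classical
  induction s using Finset.induction_on generalizing k with
  | empty =>
    rw [Finset.sum_empty] at hk
    rw [Finset.prod_empty, PowerSeries.coeff_one, if_neg (by omega)]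
  | insert i s hi ih =>
    rw [Finset.sum_insert hi] at hk
    rw [Finset.prod_insert hi, mul_comm, coeff_mul_truncGeom]
    refine Finset.sum_eq_zero fun j hj => ?_
    have := Finset.mem_range.mp hj
    split_ifs with h
    · exact ih _ (by omega)
    · rfl

end Geometric

/-- If a series `A` with nonnegative coefficients equals `∏ (1 - t^{e i}) / ∏ (1 - t^{a i})`, with as
many factors above as below, then it is a polynomial of degree at most `∑ (e i - a i)`. -/
lemma coeff_eq_zero_of_mul_prod_eq {ι : Type*} [Fintype ι] {a e : ι → ℕ} (ha : ∀ i, 0 < a i)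
    {A : PowerSeries ℤ} (hA : ∀ k, 0 ≤ PowerSeries.coeff k A)
    (h : A * ∏ i, (1 - PowerSeries.X ^ a i) = ∏ i, (1 - PowerSeries.X ^ e i)) (k : ℕ)
    (hk : ∑ i, ((e i : ℤ) - a i) < k) : PowerSeries.coeff k A = 0 := by
  have hX : (1 - PowerSeries.X : PowerSeries ℤ) ≠ 0 := by
    intro h0
    have := congrArg (PowerSeries.coeff 0) h0
    simp at this
  -- Cancel one factor `1 - t` per index.
  have h' : A * ∏ i, truncGeom (a i) = ∏ i, truncGeom (e i) := by
    simp_rw [← geom_sum_mul_neg, Finset.prod_mul_distrib, ← mul_assoc] at h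
    exact mul_right_cancel₀ (Finset.prod_ne_zero_iff.mpr fun _ _ => hX) h
  have hle := (coeff_le_coeff_mul_prod Finset.univ ha hA).2 k
  rw [h', coeff_prod_truncGeom_eq_zero] at hle
  · exact le_antisymm hle (hA k)
  · have hcast : ((∑ i, (a i - 1) : ℕ) : ℤ) = ∑ i, ((a i : ℤ) - 1) := by
      rw [Nat.cast_sum]
      exact Finset.sum_congr rfl fun i _ => by have := ha i; omega
    rw [Nat.cast_add, hcast]
    simp only [Finset.sum_sub_distrib] at hk ⊢
    linarith

/-- if `f` is quasi-homogeneous of degree `d` and type `α` with an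
isolated singularity, then `R_{≥ (n+1)d − 2w + 1} ⊆ J(f)`, where `w = α_0 + ⋯ + α_n`. -/
theorem statement2 {K : Type*} [Field K] {p : ℕ} [Fact p.Prime] [CharP K p] {n : ℕ}
    (α : Fin (n + 1) → ℕ) (hα : ∀ i, 0 < α i) (d w : ℕ) (hw : w = ∑ i, α i)
    (f : MvPolynomial (Fin (n + 1)) K)
    (hf : f.IsWeightedHomogeneous α d)
    (hsing : HasIsolatedSingularity f) :
    ∀ g ∈ Rge K n α (((n : ℤ) + 1) * d - 2 * w + 1), g ∈ jacobianIdeal f := by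
  -- Excluding `J(f) = R` ensures that no partial derivative vanishes: a zero member of a regular
  -- sequence forces the ideal of its predecessors to be `R`.
  by_cases htop : jacobianIdeal f = ⊤
  · intro g _
    rw [htop]
    trivial
  have hJ : Ideal.ofList ((List.finRange (n + 1)).map fun i => pderiv i f) = jacobianIdeal f := by
    unfold Ideal.ofList jacobianIdeal
    congr 1
    ext
    simp
  have hreg : ∀ l₁ i, l₁ ++ [i] <+: List.finRange (n + 1) → ∀ a,
      pderiv i f * a ∈ Ideal.ofList (l₁.map fun i => pderiv i f) →
        a ∈ Ideal.ofList (l₁.map fun i => pderiv i f) := by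
    rintro l₁ i ⟨l₂, hl⟩ a ha
    have h := hsing.toIsWeaklyRegular
    rw [← hl, List.append_assoc, List.map_append,
      RingTheory.Sequence.isWeaklyRegular_append_iff] at h
    have h := ((RingTheory.Sequence.isWeaklyRegular_cons_iff _ _ _).mp h.2).1
    rw [isSMulRegular_quotient_iff_mem_of_smul_mem] at h
    simpa using h a (by simpa using ha)
  have hg0 : ∀ i, pderiv i f ≠ 0 := by
    intro i h0
    obtain ⟨l₁, l₂, hl⟩ := List.append_of_mem (List.mem_finRange i)
    have h1 := hreg l₁ i ⟨l₂, by simp [hl]⟩ 1 (by simp [h0])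
    apply htop
    rw [Ideal.eq_top_iff_one, ← hJ, hl, List.map_append, Ideal.ofList_append]
    exact Ideal.mem_sup_left h1
  have hd : ∀ i, α i ≤ d := by
    intro i
    have hi : i ∈ f.vars := by
      by_contra hi
      exact hg0 i (pderiv_eq_zero_of_notMem_vars hi)
    obtain ⟨v, hv, hiv⟩ := (mem_vars_iff_mem_support i).mp hi
    rw [← hf (mem_support_iff.mp hv)]
    exact Finsupp.le_weight_of_ne_zero' α (Finsupp.mem_support_iff.mp hiv)
  have hg : ∀ i, (pderiv i f).IsWeightedHomogeneous α (d - α i) := fun i =>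
    hf.pderiv (Nat.sub_add_cancel (hd i))
  have hH := quotHilbertSeries_ofList hα hg hg0 (List.finRange (n + 1)) hreg
  rw [hJ, ← List.ofFn_eq_map, List.prod_ofFn] at hH
  have hH' : quotHilbertSeries α (jacobianIdeal f) * ∏ i, (1 - PowerSeries.X ^ α i) =
      ∏ i, (1 - PowerSeries.X ^ (d - α i)) := by
    rw [hH, mul_assoc, mul_comm (quotHilbertSeries _ _), prod_mul_quotHilbertSeries_bot hα, mul_one]
  intro g hgmem
  refine (Submodule.span_le (p := (jacobianIdeal f).restrictScalars K)).mpr ?_ hgmem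
  rintro _ ⟨k, rfl, hk⟩
  have hwt : (Finsupp.weight α k : ℤ) = ∑ i, (α i : ℤ) * (k i : ℤ) := by
    rw [Finsupp.weight_apply, Finsupp.sum_fintype _ _ (by simp)]
    push_cast
    exact Finset.sum_congr rfl fun i _ => by simp [mul_comm]
  refine mem_of_hilbertFn_eq_zero hα (k := Finsupp.weight α k) ?_
    (isWeightedHomogeneous_monomial α k 1 rfl)
  have h0 := coeff_eq_zero_of_mul_prod_eq hα
    (fun k => by simpa [quotHilbertSeries] using hilbertFn_nonneg hα (jacobianIdeal f) k) hH'
    (Finsupp.weight α k) (by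
      rw [hwt]
      have : ∀ i, (((d - α i : ℕ) : ℤ) - α i) = (d : ℤ) - 2 * α i := fun i => by
        have := hd i
        omega
      simp only [this, Finset.sum_sub_distrib, ← Finset.mul_sum, Finset.sum_const,
        Finset.card_univ, Fintype.card_fin, nsmul_eq_mul]
      rw [hw] at hk
      push_cast at hk ⊢
      linarith)
  simpa [quotHilbertSeries] using h0
end

section
/- Let R = K[x_0, …, x_n] be graded by positive integer weights α_0, …, α_n, let w = α_0 + ⋯ + α_n, let d be a positive integer, and let q = p^e where p = char K > 0. If λ is a monomial with λ · R_{≥ (n+1)d−2w+1} ⊆ m^{[q]} and λ ∉ m^{[q]}, then the weighted degree of λ is at least (q+1)w − (n+1)d. In other words, (m^{[q]} :_R R_{≥ (n+1)d−2w+1}) \ m^{[q]} ⊆ R_{≥ (q+1)w−(n+1)d} at the level of monomials. -/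
/-!
Since `λ = x^k` is not in `m^{[q]}`, every exponent satisfies `k i ≤ q - 1`, so `λ` divides
`(x_0 ⋯ x_n)^(q-1)`, which is not in `m^{[q]}` either. The cofactor `x^(q-1-k)` therefore cannot
lie in `R_{≥ (n+1)d-2w+1}`, i.e. `(q-1)w - deg λ ≤ (n+1)d - 2w`, which rearranges to the claim.
-/

open MvPolynomial Filter Topology

/-- `x^k` lies in `m^{[q]}` exactly when some exponent of `k` is at least `q`. -/
theorem monomial_mem_frobeniusPower {K : Type*} [Field K] {n q : ℕ} (k : Fin (n + 1) →₀ ℕ) :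
    monomial k (1 : K) ∈ frobeniusPower K n q ↔ ∃ i, q ≤ k i := by
  have h : frobeniusPower K n q = Ideal.span ((fun s => monomial s (1 : K)) ''
      Set.range fun i : Fin (n + 1) => Finsupp.single i q) := by
    unfold frobeniusPower
    rw [← Set.range_comp]
    congr 2
    funext i
    simp [X_pow_eq_monomial]
  rw [h, mem_ideal_span_monomial_image]
  classical
  simp [support_monomial, Finsupp.single_le_iff]

/-- if `λ` is a monomial with `λ · R_{≥ (n+1)d−2w+1} ⊆ m^{[q]}` and
`λ ∉ m^{[q]}` (`q = p^e`), then the weighted degree of `λ` is at least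
`(q+1)w − (n+1)d`. -/
theorem statement3 {K : Type*} [Field K] {p : ℕ} [Fact p.Prime] [CharP K p] {n : ℕ}
    (α : Fin (n + 1) → ℕ) (hα : ∀ i, 0 < α i) (d w : ℕ) (hw : w = ∑ i, α i)
    (hd : 0 < d) (e : ℕ) (q : ℕ) (hq : q = p ^ e)
    (k : Fin (n + 1) →₀ ℕ)
    (hcolon : ∀ g ∈ Rge K n α (((n : ℤ) + 1) * d - 2 * w + 1),
      (monomial k (1 : K)) * g ∈ frobeniusPower K n q)
    (hnot : (monomial k (1 : K)) ∉ frobeniusPower K n q) :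
    ((q : ℤ) + 1) * w - ((n : ℤ) + 1) * d ≤ ∑ i, (α i : ℤ) * (k i : ℤ) := by
  rw [monomial_mem_frobeniusPower] at hnot
  push Not at hnot
  let c : Fin (n + 1) →₀ ℕ := Finsupp.equivFunOnFinite.symm fun i => q - 1 - k i
  have hc : ∀ i, c i = q - 1 - k i := fun i => rfl
  by_contra! hlt
  have hdeg : ∑ i, (α i : ℤ) * (c i : ℤ) = ((q : ℤ) - 1) * w - ∑ i, (α i : ℤ) * (k i : ℤ) := by
    rw [hw]
    push_cast
    rw [Finset.mul_sum, ← Finset.sum_sub_distrib]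
    refine Finset.sum_congr rfl fun i _ => ?_
    have hi : (c i : ℤ) = (q : ℤ) - 1 - k i := by
      have := hnot i
      have := hc i
      omega
    rw [hi]
    ring
  have hmem := hcolon (monomial c 1) (Submodule.subset_span ⟨c, rfl, by rw [hdeg]; linarith⟩)
  rw [monomial_mul, one_mul, monomial_mem_frobeniusPower] at hmem
  obtain ⟨i, hi⟩ := hmem
  have := hnot i
  have := hc i
  rw [Finsupp.add_apply] at hi
  omega
end

section
/- Let f ∈ R = K[x_0, …, x_n] be a quasi-homogeneous polynomial of degree d and type α with an isolated singularity, and let q = p^e. If p does not divide μ_f(q), then d·μ_f(q) ≥ w(q+1) − n·d, i.e. μ_f(q) ≥ (w(q+1) − nd)/d, where w = α_0 + ⋯ + α_n. -/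
/-!
Let `k = μ_f(q)`, so `f ^ k ∈ m^[q]` and `f ^ (k - 1) ∉ m^[q]`. Differentiation preserves `m^[q]`
(for `q = p ^ e` with `e > 0`; for `q = 1` the partials themselves lie in `m`), so `k f ^ (k - 1) ∂_i f ∈ m^[q]`, and since `p ∤ k` the ideal
`J` of partial derivatives satisfies `f ^ (k - 1) J ⊆ m^[q]`.

On the other hand `R / m^[q]` has socle `∏ x_i ^ (q - 1)`, of degree `w (q - 1)`, so some monomial
`b` of degree `w (q - 1) - d (k - 1)` has `f ^ (k - 1) b ∉ m^[q]`
(`Quasi.exists_monomial_mul_notMem`). Hence `b ∉ J`.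

Finally `J` contains every form of degree above `∑ (d - α_i) - ∑ α_i = (n + 1) d - 2 w`
(`Quasi.mem_of_degree`), because the partials are a regular sequence of degrees `d - α_i`: the
Hilbert series of `R / J` is `∏ (1 - t ^ (d - α_i)) / ∏ (1 - t ^ α_i)`
(`Quasi.hilbSeries_regular`, `Quasi.hilbSeries_bot`), and nonnegativity of its coefficients bounds
its degree (`Quasi.degree_bound`). Thus `w (q - 1) - d (k - 1) ≤ (n + 1) d - 2 w`, which is the
claim.
-/

open MvPolynomial Filter Topology

/-! ### Hilbert functions of weighted-homogeneous quotients -/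

namespace Quasi

attribute [local instance] MvPolynomial.weightedGradedAlgebra

/-- The degree-`k` part of the ideal `I`, as a `K`-subspace of the polynomial ring. -/
noncomputable def gradedPart {K σ : Type*} [Field K] (α : σ → ℕ)
    (I : Ideal (MvPolynomial σ K)) (k : ℕ) : Submodule K (MvPolynomial σ K) :=
  weightedHomogeneousSubmodule K α k ⊓ I.restrictScalars K

/-- The Hilbert function of `R / I`, computed as `dim R_k - dim I_k`; it takes values in `ℤ` so
that it can be used as the coefficients of a power series with additive inverses. -/
noncomputable def hilb {K σ : Type*} [Field K] (α : σ → ℕ)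
    (I : Ideal (MvPolynomial σ K)) (k : ℕ) : ℤ :=
  (Module.finrank K (weightedHomogeneousSubmodule K α k) : ℤ) -
    Module.finrank K (gradedPart α I k)

section

variable {K σ : Type*} [Field K] {α : σ → ℕ}

lemma mem_gradedPart {I : Ideal (MvPolynomial σ K)} {k : ℕ} {a : MvPolynomial σ K} :
    a ∈ gradedPart α I k ↔ a.IsWeightedHomogeneous α k ∧ a ∈ I := by
  simp [gradedPart, mem_weightedHomogeneousSubmodule]

lemma decompose_eq_component (b : MvPolynomial σ K) (k : ℕ) :
    (DirectSum.decompose (weightedHomogeneousSubmodule K α) b k : MvPolynomial σ K) =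
      weightedHomogeneousComponent α k b :=
  weightedDecomposition.decompose'_apply K α b k

lemma component_mul {g : MvPolynomial σ K} {e : ℕ} (hg : g.IsWeightedHomogeneous α e)
    (b : MvPolynomial σ K) (k : ℕ) :
    weightedHomogeneousComponent α (e + k) (g * b) = g * weightedHomogeneousComponent α k b := by
  simp only [← decompose_eq_component]
  exact DirectSum.coe_decompose_mul_add_of_left_mem (weightedHomogeneousSubmodule K α)
    (b := b) (j := k) ((mem_weightedHomogeneousSubmodule K α e g).2 hg)

lemma component_mul_of_lt {g : MvPolynomial σ K} {e : ℕ} (hg : g.IsWeightedHomogeneous α e)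
    (b : MvPolynomial σ K) {k : ℕ} (hk : k < e) :
    weightedHomogeneousComponent α k (g * b) = 0 := by
  simp only [← decompose_eq_component]
  exact DirectSum.coe_decompose_mul_of_left_mem_of_not_le (weightedHomogeneousSubmodule K α)
    (b := b) (n := k) ((mem_weightedHomogeneousSubmodule K α e g).2 hg) (not_le.2 hk)

lemma component_mem_span {ι : Type*} {g : ι → MvPolynomial σ K} {δ : ι → ℕ}
    (hg : ∀ i, (g i).IsWeightedHomogeneous α (δ i)) (s : Set ι) {a : MvPolynomial σ K}
    (ha : a ∈ Ideal.span (g '' s)) (k : ℕ) :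
    weightedHomogeneousComponent α k a ∈ Ideal.span (g '' s) := by
  refine weightedHomogeneousComponent_mem_of_mem K α (Ideal.homogeneous_span _ _ ?_) ha k
  rintro _ ⟨i, -, rfl⟩
  exact ⟨δ i, hg i⟩

variable {I : Ideal (MvPolynomial σ K)} {g : MvPolynomial σ K} {e : ℕ}

lemma hilb_sup_of_lt (hI : ∀ a ∈ I, ∀ k, weightedHomogeneousComponent α k a ∈ I)
    (hg : g.IsWeightedHomogeneous α e) {k : ℕ} (hk : k < e) :
    hilb α (I ⊔ Ideal.span {g}) k = hilb α I k := by
  have : gradedPart α (I ⊔ Ideal.span {g}) k = gradedPart α I k := by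
    ext a
    simp only [mem_gradedPart]
    refine and_congr_right fun ha => ⟨fun h => ?_, fun h => Ideal.mem_sup_left h⟩
    obtain ⟨u, hu, v, hv, rfl⟩ := Submodule.mem_sup.1 h
    obtain ⟨b, rfl⟩ := Ideal.mem_span_singleton'.1 hv
    rw [← ha.weightedHomogeneousComponent_same, map_add, mul_comm b g,
      component_mul_of_lt hg b hk, add_zero]
    exact hI u hu k
  rw [hilb, hilb, this]

variable [Finite σ]

lemma finite_submodule (hα : ∀ i, 0 < α i) (k : ℕ) :
    Module.Finite K (weightedHomogeneousSubmodule K α k) := by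
  rw [weightedHomogeneousSubmodule_eq_finsupp_supported, AddMonoidAlgebra.supported_eq_span_single]
  refine Module.Finite.span_of_finite K (Set.Finite.image _ ?_)
  refine (Finsupp.finite_of_nat_weight_le α (fun i => (hα i).ne') k).subset ?_
  intro m hm
  exact le_of_eq hm

lemma finite_gradedPart (hα : ∀ i, 0 < α i) (I : Ideal (MvPolynomial σ K)) (k : ℕ) :
    Module.Finite K (gradedPart α I k) :=
  have := finite_submodule (K := K) hα k
  Submodule.finiteDimensional_of_le inf_le_left

lemma hilb_nonneg (hα : ∀ i, 0 < α i) (I : Ideal (MvPolynomial σ K)) (k : ℕ) :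
    0 ≤ hilb α I k := by
  have := finite_submodule (K := K) hα k
  have h : Module.finrank K (gradedPart α I k) ≤
    Module.finrank K (weightedHomogeneousSubmodule K α k) := Submodule.finrank_mono inf_le_left
  unfold hilb
  lia

lemma mem_of_hilb_eq_zero (hα : ∀ i, 0 < α i) {I : Ideal (MvPolynomial σ K)} {k : ℕ}
    (h : hilb α I k = 0) {a : MvPolynomial σ K} (ha : a.IsWeightedHomogeneous α k) : a ∈ I := by
  have := finite_submodule (K := K) hα k
  have h2 : gradedPart α I k = weightedHomogeneousSubmodule K α k := by
    refine Submodule.eq_of_le_of_finrank_eq inf_le_left ?_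
    unfold hilb at h
    lia
  have h3 : a ∈ gradedPart α I k := by
    rw [h2]
    exact ha
  exact (mem_gradedPart.1 h3).2

/-- The exact sequence `0 → (R/I)_k → (R/I)_{e+k} → (R/(I+(g)))_{e+k} → 0` (multiplication by `g`),
in terms of dimensions. It is obtained by rank-nullity for `(u, b) ↦ u + g b` on
`I_{e+k} × R_k`, whose kernel is a copy of `I_k`. -/
lemma hilb_sup_add (hα : ∀ i, 0 < α i)
    (hI : ∀ a ∈ I, ∀ k, weightedHomogeneousComponent α k a ∈ I)
    (hg : g.IsWeightedHomogeneous α e) (hreg : ∀ a, g * a ∈ I → a ∈ I) (k : ℕ) :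
    hilb α (I ⊔ Ideal.span {g}) (e + k) = hilb α I (e + k) - hilb α I k := by
  have := finite_submodule (K := K) hα k
  have := finite_gradedPart (K := K) hα I (e + k)
  let ψ : gradedPart α I (e + k) × weightedHomogeneousSubmodule K α k →ₗ[K] MvPolynomial σ K :=
    (gradedPart α I (e + k)).subtype.coprod
      ((LinearMap.mulLeft K g).comp (weightedHomogeneousSubmodule K α k).subtype)
  have hψ : ∀ x, ψ x = x.1 + g * x.2 := fun x => rfl
  have hrange : LinearMap.range ψ = gradedPart α (I ⊔ Ideal.span {g}) (e + k) := by
    ext a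
    rw [mem_gradedPart]
    constructor
    · rintro ⟨⟨⟨u, hu⟩, ⟨b, hb⟩⟩, rfl⟩
      rw [hψ]
      rw [mem_gradedPart] at hu
      refine ⟨hu.1.add (hg.mul hb), add_mem (Ideal.mem_sup_left hu.2) (Ideal.mem_sup_right ?_)⟩
      exact Ideal.mul_mem_right _ _ (Ideal.mem_span_singleton_self g)
    · rintro ⟨ha, h⟩
      obtain ⟨u, hu, v, hv, rfl⟩ := Submodule.mem_sup.1 h
      obtain ⟨b, rfl⟩ := Ideal.mem_span_singleton'.1 hv
      refine ⟨⟨⟨weightedHomogeneousComponent α (e + k) u, ?_⟩,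
        ⟨weightedHomogeneousComponent α k b, weightedHomogeneousComponent_mem _ _ _⟩⟩, ?_⟩
      · exact mem_gradedPart.2
          ⟨weightedHomogeneousComponent_isWeightedHomogeneous _ _, hI u hu _⟩
      · rw [hψ, ← ha.weightedHomogeneousComponent_same, map_add, mul_comm b g, component_mul hg]
  have hker : Module.finrank K (LinearMap.ker ψ) = Module.finrank K (gradedPart α I k) := by
    let θ : LinearMap.ker ψ →ₗ[K] MvPolynomial σ K :=
      (weightedHomogeneousSubmodule K α k).subtype ∘ₗ (LinearMap.snd K _ _) ∘ₗ
        (LinearMap.ker ψ).subtype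
    have hθ : ∀ x, θ x = x.1.2 := fun x => rfl
    have hinj : Function.Injective θ := by
      rintro ⟨⟨⟨u, hu⟩, ⟨b, hb⟩⟩, hx⟩ ⟨⟨⟨u', hu'⟩, ⟨b', hb'⟩⟩, hx'⟩ h0
      rw [LinearMap.mem_ker, hψ] at hx hx'
      rw [hθ, hθ] at h0
      simp only at h0 hx hx'
      subst h0
      obtain rfl : u = u' := add_right_cancel (hx.trans hx'.symm)
      rfl
    rw [← LinearMap.finrank_range_of_inj hinj]
    congr 2
    all_goals
      ext a
      rw [mem_gradedPart]
      constructor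
      · rintro ⟨⟨⟨⟨u, hu⟩, ⟨b, hb⟩⟩, hx⟩, rfl⟩
        rw [hθ]
        refine ⟨hb, hreg _ ?_⟩
        rw [LinearMap.mem_ker, hψ] at hx
        rw [eq_neg_of_add_eq_zero_right hx]
        exact I.neg_mem (mem_gradedPart.1 hu).2
      · rintro ⟨ha, haI⟩
        refine ⟨⟨⟨⟨-(g * a), ?_⟩, ⟨a, ha⟩⟩, ?_⟩, rfl⟩
        · exact mem_gradedPart.2 ⟨(hg.mul ha).neg, I.neg_mem (I.mul_mem_left _ haI)⟩
        · rw [LinearMap.mem_ker, hψ]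
          simp
  have hrn := ψ.finrank_range_add_finrank_ker
  rw [hrange, hker, Module.finrank_prod] at hrn
  unfold hilb
  lia

/-- The Hilbert series of `R / I`. -/
noncomputable def hilbSeries (α : σ → ℕ) (I : Ideal (MvPolynomial σ K)) : PowerSeries ℤ :=
  PowerSeries.mk (hilb α I)

lemma hilbSeries_sup (hα : ∀ i, 0 < α i)
    (hI : ∀ a ∈ I, ∀ k, weightedHomogeneousComponent α k a ∈ I)
    (hg : g.IsWeightedHomogeneous α e) (hreg : ∀ a, g * a ∈ I → a ∈ I) :
    hilbSeries α (I ⊔ Ideal.span {g}) = hilbSeries α I * (1 - PowerSeries.X ^ e) := by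
  ext k
  rw [mul_sub, mul_one, map_sub, PowerSeries.coeff_mul_X_pow']
  simp only [hilbSeries, PowerSeries.coeff_mk]
  split_ifs with h
  · obtain ⟨k, rfl⟩ := Nat.exists_eq_add_of_le h
    rw [hilb_sup_add hα hI hg hreg, Nat.add_sub_cancel_left]
  · rw [hilb_sup_of_lt hI hg (not_le.1 h), sub_zero]

/-- A homogeneous regular sequence of degrees `δ i` multiplies the Hilbert series of `R` by
`∏ (1 - t ^ δ i)`. Regularity is expressed elementwise: `g j` is a nonzerodivisor modulo the
preceding `g i`. -/
lemma hilbSeries_regular (hα : ∀ i, 0 < α i) {N : ℕ} {g : Fin N → MvPolynomial σ K}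
    {δ : Fin N → ℕ} (hg : ∀ i, (g i).IsWeightedHomogeneous α (δ i))
    (hreg : ∀ j a, g j * a ∈ Ideal.span (g '' {i | i < j}) → a ∈ Ideal.span (g '' {i | i < j})) :
    hilbSeries α (Ideal.span (Set.range g)) =
      hilbSeries α (⊥ : Ideal (MvPolynomial σ K)) * ∏ i, (1 - PowerSeries.X ^ δ i) := by
  have key : ∀ j ≤ N, hilbSeries α (Ideal.span (g '' {i | i.val < j})) =
      hilbSeries α (⊥ : Ideal (MvPolynomial σ K)) *
        ∏ i with i.val < j, (1 - PowerSeries.X ^ δ i) := by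
    intro j
    induction j with
    | zero => simp
    | succ j ih =>
      intro hj
      have h1 : {i : Fin N | i.val < j + 1} = insert ⟨j, hj⟩ {i : Fin N | i.val < j} := by
        ext i
        simp [Fin.ext_iff]
        lia
      have h2 : (Finset.univ.filter fun i : Fin N => i.val < j + 1) =
          insert ⟨j, hj⟩ (Finset.univ.filter fun i : Fin N => i.val < j) := by
        ext i
        simp [Fin.ext_iff]
        lia
      rw [h1, h2, Set.image_insert_eq, Ideal.span_insert, sup_comm,
        Finset.prod_insert (by simp),
        hilbSeries_sup (I := Ideal.span (g '' {i | i.val < j})) hα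
          (fun a ha k => component_mem_span hg _ ha k) (hg _) (hreg ⟨j, hj⟩),
        ih (by lia)]
      ring
  have h := key N le_rfl
  simpa using h

end

/-- The Hilbert series of the polynomial ring itself, from the regular sequence of variables. -/
lemma hilbSeries_bot {K : Type*} [Field K] {N : ℕ} {α : Fin N → ℕ} (hα : ∀ i, 0 < α i) :
    hilbSeries α (⊥ : Ideal (MvPolynomial (Fin N) K)) * ∏ i, (1 - PowerSeries.X ^ α i) = 1 := by
  rw [← hilbSeries_regular hα (g := fun i => (X i : MvPolynomial (Fin N) K))
    (fun i => isWeightedHomogeneous_X K α i)]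
  · ext k
    -- The ideal generated by the variables contains every form of positive degree and no nonzero
    -- form of degree `0`.
    have hW : ∀ k (a : MvPolynomial (Fin N) K), a.IsWeightedHomogeneous α k →
        (a ∈ Ideal.span (Set.range fun i => (X i : MvPolynomial (Fin N) K)) ↔
          k ≠ 0 ∨ a = 0) := by
      intro k a ha
      have := mem_ideal_span_X_image (x := a) (s := Set.univ)
      rw [Set.image_univ] at this
      rw [this]
      constructor
      · intro h
        by_cases h0 : a = 0
        · exact Or.inr h0
        · left
          rintro rfl
          obtain ⟨m, hm⟩ := support_nonempty.2 h0
          obtain ⟨i, -, hi⟩ := h m hm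
          have hw := ha (mem_support_iff.1 hm)
          have := Finsupp.le_weight α (s := i) (hα i).ne' m
          lia
      · rintro (h | rfl) m hm
        · by_contra! hc
          have : m = 0 := Finsupp.ext fun i => hc i trivial
          subst this
          have hw := ha (mem_support_iff.1 hm)
          simp at hw
          lia
        · simp at hm
    rw [PowerSeries.coeff_one, hilbSeries, PowerSeries.coeff_mk, hilb]
    split_ifs with h
    · subst h
      have h1 : gradedPart α (Ideal.span (Set.range fun i => (X i : MvPolynomial (Fin N) K))) 0
          = ⊥ := by
        ext a
        rw [mem_gradedPart, Submodule.mem_bot]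
        constructor
        · rintro ⟨h1, h2⟩
          simpa using (hW 0 a h1).1 h2
        · rintro rfl
          exact ⟨isWeightedHomogeneous_zero _ _ _, zero_mem _⟩
      have h2 : weightedHomogeneousSubmodule K α 0 =
          Submodule.span K {(1 : MvPolynomial (Fin N) K)} := by
        ext a
        rw [mem_weightedHomogeneousSubmodule, Submodule.mem_span_singleton]
        constructor
        · intro ha
          refine ⟨coeff 0 a, ?_⟩
          ext m
          rw [coeff_smul, coeff_one]
          split_ifs with hm
          · subst hm
            simp
          · rw [smul_zero]
            by_contra hc
            obtain ⟨i, hi⟩ := Finsupp.ne_iff.1 (Ne.symm hm)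
            have hw := ha (Ne.symm hc)
            have := Finsupp.le_weight α (s := i) (hα i).ne' m
            simp at hi
            lia
        · rintro ⟨c, rfl⟩
          exact (weightedHomogeneousSubmodule K α 0).smul_mem c (isWeightedHomogeneous_one K α)
      rw [h1, h2, finrank_span_singleton one_ne_zero]
      simp
    · have h1 : gradedPart α (Ideal.span (Set.range fun i => (X i : MvPolynomial (Fin N) K))) k
          = weightedHomogeneousSubmodule K α k := by
        ext a
        rw [mem_gradedPart, mem_weightedHomogeneousSubmodule]
        exact ⟨fun h => h.1, fun ha => ⟨ha, (hW k a ha).2 (Or.inl h)⟩⟩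
      rw [h1, sub_self]
  · intro j a h
    rw [mem_ideal_span_X_image] at h ⊢
    intro m hm
    obtain ⟨i, hi, h⟩ := h (m + Finsupp.single j 1) (by
      rw [mem_support_iff, mul_comm, coeff_mul_X]
      exact mem_support_iff.1 hm)
    refine ⟨i, hi, ?_⟩
    rw [Set.mem_ofPred_eq] at hi
    simpa [Finsupp.single_apply, hi.ne'] using h

/-! ### The degree bound for complete intersections -/

open Finset in
/-- If `P` has nonnegative coefficients and `P * ∏ (1 - t ^ α i) = ∏ (1 - t ^ δ i)`, then every
exponent occurring in `P` is at most `∑ δ i - ∑ α i`. Cancelling `(1 - t)` from each factor leaves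
`P * A = B` with `A`, `B` products of polynomials `1 + t + ⋯ + t ^ (a - 1)`; since `A` is monic with
nonnegative coefficients, the product of a term of `P` with the top term of `A` cannot cancel, so
its degree is at most that of `B`. In particular `P` is a polynomial, which need not be known
beforehand. -/
lemma degree_bound {ι : Type*} [Fintype ι] {P : PowerSeries ℤ}
    (hP : ∀ k, 0 ≤ PowerSeries.coeff k P) {α δ : ι → ℕ} (hα : ∀ i, 0 < α i) (hδ : ∀ i, 0 < δ i)
    (h : P * ∏ i, (1 - PowerSeries.X ^ α i) = ∏ i, (1 - PowerSeries.X ^ δ i)) {k : ℕ}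
    (hk : PowerSeries.coeff k P ≠ 0) : k + ∑ i, α i ≤ ∑ i, δ i := by
  -- The polynomials live over `ℕ`, which makes nonnegativity of their coefficients automatic.
  let G : (ι → ℕ) → Polynomial ℕ := fun a => ∏ i, ∑ j ∈ range (a i), Polynomial.X ^ j
  let ρ : Polynomial ℕ →+* PowerSeries ℤ :=
    (Polynomial.coeToPowerSeries.ringHom).comp (Polynomial.mapRingHom (Nat.castRingHom ℤ))
  have hρ : ∀ (a : Polynomial ℕ) m, PowerSeries.coeff m (ρ a) = (a.coeff m : ℤ) := by
    intro a m
    simp [ρ]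
  have hρX : ρ Polynomial.X = PowerSeries.X := by simp [ρ]
  have hG : ∀ a : ι → ℕ, ∏ i, (1 - (PowerSeries.X : PowerSeries ℤ) ^ a i) =
      ρ (G a) * (1 - PowerSeries.X) ^ Fintype.card ι := by
    intro a
    simp only [G, map_prod, map_sum, map_pow, hρX]
    rw [← Finset.card_univ, ← Finset.prod_const, ← Finset.prod_mul_distrib]
    refine Finset.prod_congr rfl fun i _ => ?_
    rw [geom_sum_mul_neg]
  have hdeg : ∀ a : ι → ℕ, (∀ i, 0 < a i) → (G a).Monic ∧ (G a).natDegree + Fintype.card ι =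
      ∑ i, a i := by
    intro a ha
    have hm : ∀ i ∈ (univ : Finset ι), (∑ j ∈ range (a i), Polynomial.X ^ j : Polynomial ℕ).Monic :=
      fun i _ => Polynomial.monic_geom_sum_X (ha i).ne'
    refine ⟨Polynomial.monic_prod_of_monic _ _ hm, ?_⟩
    simp only [G]
    rw [Polynomial.natDegree_prod_of_monic _ _ hm, ← Finset.card_univ, Finset.card_eq_sum_ones,
      ← Finset.sum_add_distrib]
    refine Finset.sum_congr rfl fun i _ => ?_
    have := ha i
    obtain ⟨b, hb⟩ : ∃ b, a i = b + 1 := ⟨a i - 1, by lia⟩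
    rw [hb]
    congr 1
    rw [Finset.sum_range_succ, Polynomial.natDegree_add_eq_right_of_degree_lt]
    · simp
    · rw [Polynomial.degree_X_pow]
      refine (Polynomial.degree_sum_le _ _).trans_lt ?_
      rw [Finset.sup_lt_iff (WithBot.bot_lt_coe _)]
      intro j hj
      rw [Polynomial.degree_X_pow]
      exact_mod_cast Finset.mem_range.1 hj
  have hne : (1 - PowerSeries.X : PowerSeries ℤ) ≠ 0 := by
    intro h0
    simpa using congrArg (PowerSeries.coeff 0) h0
  rw [hG, hG, ← mul_assoc] at h
  replace h := mul_right_cancel₀ (pow_ne_zero _ hne) h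
  obtain ⟨hmα, hdα⟩ := hdeg α hα
  obtain ⟨-, hdδ⟩ := hdeg δ hδ
  have hle : PowerSeries.coeff k P ≤
      PowerSeries.coeff (k + (G α).natDegree) (P * ρ (G α)) := by
    rw [PowerSeries.coeff_mul]
    have := Finset.single_le_sum (s := antidiagonal (k + (G α).natDegree))
      (f := fun x => PowerSeries.coeff x.1 P * PowerSeries.coeff x.2 (ρ (G α)))
      (a := (k, (G α).natDegree))
      (fun x _ => mul_nonneg (hP _) (by rw [hρ]; positivity)) (by simp)
    simpa [hρ, hmα.coeff_natDegree] using this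
  rw [h, hρ] at hle
  have hpos := (hP k).lt_of_ne' hk
  have : k + (G α).natDegree ≤ (G δ).natDegree := by
    apply Polynomial.le_natDegree_of_ne_zero
    intro h0
    rw [h0] at hle
    lia
  lia

/-- The Macaulay bound: a homogeneous regular sequence of `N` elements of positive degrees `δ i` in
`N` weighted variables generates an ideal containing all forms of degree above
`∑ δ i - ∑ α i`. -/
lemma mem_of_degree {K : Type*} [Field K] {N : ℕ} {α : Fin N → ℕ} (hα : ∀ i, 0 < α i)
    {g : Fin N → MvPolynomial (Fin N) K} {δ : Fin N → ℕ} (hδ : ∀ i, 0 < δ i)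
    (hg : ∀ i, (g i).IsWeightedHomogeneous α (δ i))
    (hreg : ∀ j a, g j * a ∈ Ideal.span (g '' {i | i < j}) → a ∈ Ideal.span (g '' {i | i < j}))
    {k : ℕ} (hk : ∑ i, δ i < k + ∑ i, α i) {a : MvPolynomial (Fin N) K}
    (ha : a.IsWeightedHomogeneous α k) : a ∈ Ideal.span (Set.range g) := by
  refine mem_of_hilb_eq_zero hα ?_ ha
  by_contra hc
  refine hk.not_ge (degree_bound (P := hilbSeries α (Ideal.span (Set.range g))) ?_ hα hδ ?_ ?_)
  · intro k
    rw [hilbSeries, PowerSeries.coeff_mk]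
    exact hilb_nonneg hα _ k
  · rw [hilbSeries_regular hα hg hreg, mul_right_comm, hilbSeries_bot hα, one_mul]
  · rwa [hilbSeries, PowerSeries.coeff_mk]

/-! ### The Frobenius power and the partial derivatives -/

lemma mem_frobeniusPower {K : Type*} [Field K] {n q : ℕ} {a : MvPolynomial (Fin (n + 1)) K} :
    a ∈ frobeniusPower K n q ↔ ∀ m ∈ a.support, ∃ i, q ≤ m i := by
  have h := mem_ideal_span_monomial_image (x := a)
    (s := Set.range fun i : Fin (n + 1) => Finsupp.single i q)
  rw [← Set.range_comp] at h
  have h2 : ((fun s => monomial s (1 : K)) ∘ fun i : Fin (n + 1) => Finsupp.single i q) =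
      fun i : Fin (n + 1) => (X i : MvPolynomial (Fin (n + 1)) K) ^ q := by
    funext i
    simp [X_pow_eq_monomial]
  rw [h2] at h
  rw [frobeniusPower, h]
  simp

lemma pderiv_mem_frobeniusPower {K : Type*} [Field K] {n q : ℕ} (hq : (q : K) = 0)
    {a : MvPolynomial (Fin (n + 1)) K} (ha : a ∈ frobeniusPower K n q) (i : Fin (n + 1)) :
    pderiv i a ∈ frobeniusPower K n q := by
  unfold frobeniusPower at ha ⊢
  induction ha using Submodule.span_induction with
  | mem x hx =>
    obtain ⟨j, rfl⟩ := hx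
    have : (q : MvPolynomial (Fin (n + 1)) K) = 0 := by
      rw [← map_natCast (C : K →+* _), hq, map_zero]
    simp [Derivation.leibniz_pow, this]
  | zero => simp
  | add x y _ _ hx hy =>
    rw [map_add]
    exact add_mem hx hy
  | smul c x hx' hx =>
    rw [smul_eq_mul, Derivation.leibniz]
    exact add_mem (Ideal.mul_mem_left _ _ hx) (Ideal.mul_mem_right _ _ hx')

/-- Socle pairing of `R / m^[q]`: a form of degree `D` outside `m^[q]` can be multiplied into the
socle monomial `∏ x_i ^ (q - 1)` by a monomial of complementary degree. -/
lemma exists_monomial_mul_notMem {K : Type*} [Field K] {n q D : ℕ} (hq : 0 < q)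
    {α : Fin (n + 1) → ℕ} {a : MvPolynomial (Fin (n + 1)) K} (ha : a.IsWeightedHomogeneous α D)
    (hn : a ∉ frobeniusPower K n q) :
    ∃ (k : ℕ) (b : MvPolynomial (Fin (n + 1)) K), b.IsWeightedHomogeneous α k ∧
      D + k = (∑ i, α i) * (q - 1) ∧ a * b ∉ frobeniusPower K n q := by
  rw [mem_frobeniusPower] at hn
  push Not at hn
  obtain ⟨m, hm, hlt⟩ := hn
  let t : Fin (n + 1) →₀ ℕ := Finsupp.equivFunOnFinite.symm fun _ => q - 1
  have hmt : m ≤ t := fun i => by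
    have := hlt i
    simp [t]
    lia
  refine ⟨Finsupp.weight α (t - m), monomial (t - m) 1, isWeightedHomogeneous_monomial _ _ _ rfl,
    ?_, ?_⟩
  · rw [← ha (mem_support_iff.1 hm), ← map_add, add_tsub_cancel_of_le hmt,
      Finsupp.weight_apply, Finsupp.sum_fintype _ _ (by simp), Finset.sum_mul]
    simp [t, mul_comm]
  · rw [mem_frobeniusPower]
    push Not
    refine ⟨t, ?_, fun i => ?_⟩
    · rw [mem_support_iff]
      have := coeff_mul_monomial m (t - m) (1 : K) a
      rw [add_tsub_cancel_of_le hmt, mul_one] at this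
      rw [this]
      exact mem_support_iff.1 hm
    · simp [t]
      lia

lemma regular_elementwise {K : Type*} [Field K] {n : ℕ} {f : MvPolynomial (Fin (n + 1)) K}
    (h : HasIsolatedSingularity f) :
    (∀ j a, pderiv j f * a ∈ Ideal.span ((fun i => pderiv i f) '' {i | i < j}) →
      a ∈ Ideal.span ((fun i => pderiv i f) '' {i | i < j})) ∧
    Ideal.span (Set.range fun i => pderiv i f) ≠ ⊤ := by
  constructor
  · intro j a ha
    have h1 := h.regular_mod_prev j.val (by simp; lia)
    rw [isSMulRegular_quotient_iff_mem_of_smul_mem] at h1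
    have h2 : Ideal.ofList ((((List.finRange (n + 1)).map fun i => pderiv i f)).take j.val) =
        Ideal.span ((fun i => pderiv i f) '' {i | i < j}) := by
      rw [Ideal.ofList]
      congr 1
      ext x
      simp only [Set.mem_ofPred_eq, Set.mem_image, List.mem_take_iff_getElem]
      constructor
      · rintro ⟨i, hi, rfl⟩
        simp only [List.length_map, List.length_finRange] at hi
        refine ⟨⟨i, by lia⟩, ?_, by simp⟩
        rw [Fin.lt_def]
        simp only
        lia
      · rintro ⟨i, hi, rfl⟩
        rw [Fin.lt_def] at hi
        exact ⟨i.val, by simp; lia, by simp⟩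
    rw [h2] at h1
    simp only [smul_eq_mul, Ideal.mul_top] at h1
    refine h1 a ?_
    simpa using ha
  · intro ht
    apply h.top_ne_smul
    rw [smul_eq_mul, Ideal.mul_top, ← ht, Ideal.ofList]
    congr 1
    ext x
    simp

/-- Every weight is below the degree: otherwise some partial derivative is constant, hence either
`0` (not regular) or a unit (the partials generate `R`). -/
lemma weight_lt_degree {K : Type*} [Field K] {n : ℕ} {α : Fin (n + 1) → ℕ}
    (hα : ∀ i, 0 < α i) {d : ℕ} {f : MvPolynomial (Fin (n + 1)) K}
    (hf : f.IsWeightedHomogeneous α d) (h : HasIsolatedSingularity f) (i : Fin (n + 1)) :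
    α i < d := by
  obtain ⟨hreg, htop⟩ := regular_elementwise h
  have hne : pderiv i f ≠ 0 := by
    intro h0
    apply htop
    rw [Ideal.eq_top_iff_one]
    exact Ideal.span_mono (Set.image_subset_range _ _) (hreg i 1 (by simp [h0]))
  obtain ⟨m, hm⟩ := support_nonempty.2 hne
  have hm' : coeff (m + Finsupp.single i 1) f ≠ 0 := by
    rw [mem_support_iff, coeff_pderiv] at hm
    exact left_ne_zero_of_mul hm
  have hw := hf hm'
  rw [map_add, Finsupp.weight_single, one_smul] at hw
  refine lt_of_le_of_ne (by lia) ?_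
  intro hd
  have hhom : (pderiv i f).IsWeightedHomogeneous α 0 := hf.pderiv (by lia)
  have hC : pderiv i f = C (coeff 0 (pderiv i f)) := by
    ext m'
    rw [coeff_C]
    split_ifs with hm0
    · rw [hm0]
    · by_contra hc
      obtain ⟨j, hj⟩ := Finsupp.ne_iff.1 (Ne.symm hm0)
      have := Finsupp.le_weight α (s := j) (hα j).ne' m'
      have := hhom hc
      simp at hj
      lia
  apply htop
  refine Ideal.eq_top_of_isUnit_mem _ (Ideal.subset_span ⟨i, rfl⟩) ?_
  simp only
  rw [hC] at hne ⊢
  exact (isUnit_iff_ne_zero.2 (by simpa using hne)).map C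

end Quasi

/-- if `f` is quasi-homogeneous of degree `d` and type `α` with an isolated
singularity, `q = p^e`, and `p ∤ μ_f(q)`, then `d·μ_f(q) ≥ w(q+1) − nd`. -/
theorem statement4 {K : Type*} [Field K] {p : ℕ} [Fact p.Prime] [CharP K p] {n : ℕ}
    (α : Fin (n + 1) → ℕ) (hα : ∀ i, 0 < α i) (d w : ℕ) (hw : w = ∑ i, α i)
    (f : MvPolynomial (Fin (n + 1)) K)
    (hf : f.IsWeightedHomogeneous α d)
    (hsing : HasIsolatedSingularity f)
    (e : ℕ) (q : ℕ) (hq : q = p ^ e)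
    (hnd : ¬ p ∣ muF f q) :
    w * (q + 1) ≤ d * muF f q + n * d := by
  subst hw
  have hp : p.Prime := Fact.out
  have hqpos : 0 < q := hq ▸ pow_pos hp.pos e
  set k := muF f q with hk
  have hk0 : k ≠ 0 := fun h => hnd (h ▸ dvd_zero p)
  -- The infimum is attained: for an empty set it would be `0`, which `p` divides.
  have hmem : f ^ k ∈ frobeniusPower K n q :=
    Nat.sInf_mem (Set.nonempty_iff_ne_empty.2 fun h => hk0 (by
      rw [hk, muF]
      exact (congrArg sInf h).trans Nat.sInf_empty))
  have hnot : f ^ (k - 1) ∉ frobeniusPower K n q :=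
    Nat.notMem_of_lt_sInf (show k - 1 < muF f q by lia)
  have hlt := Quasi.weight_lt_degree hα hf hsing
  have hhom : ∀ i, (pderiv i f).IsWeightedHomogeneous α (d - α i) := fun i =>
    hf.pderiv (by have := hlt i; lia)
  have hJ : ∀ i, f ^ (k - 1) * pderiv i f ∈ frobeniusPower K n q := by
    intro i
    rcases Nat.eq_zero_or_pos e with rfl | he
    · -- For `q = 1` the derivatives do not preserve `m`, but they lie in `m` by homogeneity.
      refine Ideal.mul_mem_left _ _ ?_
      rw [Quasi.mem_frobeniusPower]
      intro m hm
      by_contra! hc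
      have hm0 : m = 0 := Finsupp.ext fun j => by
        have := hc j
        simp at hq ⊢
        lia
      have h1 := hhom i (mem_support_iff.1 hm)
      have h2 := hlt i
      rw [hm0, map_zero] at h1
      lia
    · have hqK : (q : K) = 0 := by
        rw [hq, Nat.cast_pow, CharP.cast_eq_zero, zero_pow he.ne']
      have h1 := Quasi.pderiv_mem_frobeniusPower hqK hmem i
      rw [Derivation.leibniz_pow, smul_eq_mul, nsmul_eq_mul] at h1
      have hkK : (k : K) ≠ 0 := fun h => hnd ((CharP.cast_eq_zero_iff K p k).1 h)
      have h2 := Ideal.mul_mem_left _ (C ((k : K)⁻¹)) h1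
      rwa [← map_natCast (C : K →+* _), ← mul_assoc, ← C_mul, inv_mul_cancel₀ hkK, C_1,
        one_mul] at h2
  obtain ⟨s, b, hb, hs, hbn⟩ := Quasi.exists_monomial_mul_notMem hqpos (hf.pow (k - 1)) hnot
  have hbJ : b ∉ Ideal.span (Set.range fun i => pderiv i f) := by
    intro hbJ
    apply hbn
    clear hb hbn
    induction hbJ using Submodule.span_induction with
    | mem x hx =>
      obtain ⟨i, rfl⟩ := hx
      exact hJ i
    | zero => simp
    | add x y _ _ hx hy =>
      rw [mul_add]
      exact add_mem hx hy
    | smul c x _ hx =>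
      rw [smul_eq_mul, mul_left_comm]
      exact Ideal.mul_mem_left _ _ hx
  have hdeg : s + ∑ i, α i ≤ ∑ i, (d - α i) := by
    by_contra! hc
    exact hbJ (Quasi.mem_of_degree hα (fun i => Nat.sub_pos_of_lt (hlt i)) hhom
      (Quasi.regular_elementwise hsing).1 hc hb)
  have hsum : ∑ i, (d - α i) + ∑ i, α i = (n + 1) * d := by
    rw [← Finset.sum_add_distrib, Finset.sum_congr rfl fun i _ => Nat.sub_add_cancel (hlt i).le]
    simp
  obtain ⟨k', hk'⟩ : ∃ k', k = k' + 1 := ⟨k - 1, by lia⟩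
  obtain ⟨q', rfl⟩ : ∃ q', q = q' + 1 := ⟨q - 1, by lia⟩
  rw [hk'] at hs ⊢
  simp only [smul_eq_mul, Nat.add_sub_cancel] at hs
  nlinarith
end

section
/- Let f ∈ R = K[x_0, …, x_n] be a quasi-homogeneous polynomial of degree d and type α. Then μ_f(q) ≤ ⌈(wq − w + 1)/d⌉ for all powers q = p^e, where w = α_0 + ⋯ + α_n. -/
/-!
If `k * d > w * (q - 1)`, then every monomial `x^m` of `f ^ k` has weighted degree
`∑ i, m i * α i = k * d`. If all exponents were at most `q - 1`, this degree would be at most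
`w * (q - 1)`; so some exponent is at least `q`, and `x^m` lies in the monomial ideal `m^{[q]}`.
Hence `f ^ k ∈ m^{[q]}` and `μ_f(q) ≤ k`. The least such `k` is `⌈(wq - w + 1)/d⌉`.
-/

open MvPolynomial Filter Topology

/-- A weighted homogeneous polynomial of degree above `(q - 1) * ∑ i, α i`, the top degree of
`R / m^{[q]}`, lies in `m^{[q]}`. The degree bound is written without subtraction. -/
lemma mem_frobeniusPower_of_lt {K : Type*} [Field K] {n : ℕ} {α : Fin (n + 1) → ℕ} {D q : ℕ}
    {g : MvPolynomial (Fin (n + 1)) K} (hg : g.IsWeightedHomogeneous α D)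
    (hD : (∑ i, α i) * q < D + ∑ i, α i) : g ∈ frobeniusPower K n q := by
  have hI : frobeniusPower K n q = Ideal.span ((fun s => monomial s (1 : K)) ''
      Set.range fun i : Fin (n + 1) => Finsupp.single i q) := by
    rw [frobeniusPower, ← Set.range_comp]
    simp only [Function.comp_def, X_pow_eq_monomial]
  rw [hI, mem_ideal_span_monomial_image]
  intro m hm
  have hdeg := hg (mem_support_iff.mp hm)
  rw [Finsupp.weight_apply, Finsupp.sum_fintype _ _ (by simp)] at hdeg
  by_contra! hlt
  have hlt' : ∀ i, m i + 1 ≤ q := fun i => by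
    have h := hlt _ ⟨i, rfl⟩
    rw [Finsupp.single_le_iff] at h
    omega
  have hsum : ∑ i, (m i + 1) * α i ≤ ∑ i, q * α i :=
    Finset.sum_le_sum fun i _ => Nat.mul_le_mul_right _ (hlt' i)
  simp only [add_mul, one_mul, Finset.sum_add_distrib, ← Finset.mul_sum] at hsum
  simp only [smul_eq_mul] at hdeg
  rw [hdeg, mul_comm q] at hsum
  omega

/-- if `f` is quasi-homogeneous of degree `d` and type `α`, then
`μ_f(q) ≤ ⌈(wq − w + 1)/d⌉` for all `q = p^e`, where `w = α_0 + ⋯ + α_n`. -/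
theorem statement5 {K : Type*} [Field K] {p : ℕ} [Fact p.Prime] [CharP K p] {n : ℕ}
    (α : Fin (n + 1) → ℕ) (hα : ∀ i, 0 < α i) (d w : ℕ) (hw : w = ∑ i, α i)
    (hd : 0 < d)
    (f : MvPolynomial (Fin (n + 1)) K)
    (hf : f.IsWeightedHomogeneous α d)
    (e : ℕ) (q : ℕ) (hq : q = p ^ e) :
    (muF f q : ℤ) ≤ ⌈((w : ℚ) * q - w + 1) / (d : ℚ)⌉ := by
  have hq1 : 1 ≤ q := hq ▸ Nat.one_le_pow _ _ (Fact.out : p.Prime).pos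
  have hd' : (0 : ℚ) < d := by exact_mod_cast hd
  have hnum : (0 : ℚ) ≤ (w : ℚ) * q - w + 1 := by
    have h1 : (1 : ℚ) ≤ q := by exact_mod_cast hq1
    nlinarith [Nat.cast_nonneg (α := ℚ) w]
  obtain ⟨k, hk⟩ := Int.eq_ofNat_of_zero_le (Int.ceil_nonneg (div_nonneg hnum hd'.le))
  have hle := Int.le_ceil (((w : ℚ) * q - w + 1) / (d : ℚ))
  rw [hk, Int.cast_natCast, div_le_iff₀ hd'] at hle
  rw [hk, Nat.cast_le]
  refine Nat.sInf_le (mem_frobeniusPower_of_lt (hf.pow k) ?_)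
  rw [← hw, smul_eq_mul, Nat.lt_iff_add_one_le]
  have h : (w : ℚ) * q + 1 ≤ k * d + w := by linarith
  exact_mod_cast h
end

section
/- Let f ∈ R = K[x_0, …, x_n] be a quasi-homogeneous polynomial of degree d and type α with an isolated singularity, and set w = α_0 + ⋯ + α_n. Suppose p ≥ nd − d − w + 1. If d·μ_f(q) < w·q for some power q = p^e, then μ_f(pq) = p·μ_f(q); in particular the sequence p^e ↦ μ_f(p^e)/p^e is constant for p^e ≥ q. -/
/-!
Always `p (μ_f(q) - 1) < μ_f(pq) ≤ p μ_f(q)`, because `g^p ∈ m^{[pq]}` if and only if `g ∈ m^{[q]}`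
(`pow_mem_frobeniusPower_iff`). If the second inequality is strict, `μ = μ_f(pq)` is prime to `p`.
Derivatives preserve `m^{[pq]}`, so `f^μ ∈ m^{[pq]}` gives `f^(μ-1) J ⊆ m^{[pq]}`, where `J` is the
Jacobian ideal of `f`.

Since the partial derivatives are a regular sequence of `n + 1` forms of degrees `d - α_i`, the ring
`R/J` vanishes in degrees larger than `∑ (d - α_i) - w = (n + 1) d - 2 w` (`mem_of_large_degree`).
This follows from the Hilbert series identity `H ∏ (1 - t^{α_i}) = ∏ (1 - t^{d - α_i})` and the
nonnegativity of the coefficients of `H` (`coeff_eq_zero_of_mul_prod_eq`). On the other hand, a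
monomial of `f^(μ-1)` outside `m^{[pq]}` divides `(x_0 ⋯ x_n)^(pq-1)`, which is not in `m^{[pq]}`; the
cofactor is therefore not in `J`, and comparing degrees yields `d μ ≥ w p q + w - n d`
(`degree_bound`). Together with `d μ ≤ d (p μ_f(q) - 1) ≤ p (w q - 1) - d` this forces
`p ≤ n d - d - w`, contrary to the hypothesis on `p`.

The strict inequality `d μ_f(q) < w q` passes from `q` to `pq`, so the step can be iterated.
-/

open MvPolynomial Filter Topology

namespace QuasiHomogeneous

variable {K : Type*} [Field K] {N : ℕ}

/-! ### Hilbert series and regular sequences -/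

/-- Multiplication by a form of degree `e` shifts weighted homogeneous components by `e`. -/
theorem component_mul {α : Fin N → ℕ} {e : ℕ} {g : MvPolynomial (Fin N) K}
    (hg : g.IsWeightedHomogeneous α e) (D : ℕ) (r : MvPolynomial (Fin N) K) :
    weightedHomogeneousComponent α D (g * r) =
      if e ≤ D then g * weightedHomogeneousComponent α (D - e) r else 0 := by
  induction r using MvPolynomial.induction_on' with
  | monomial u a =>
    have h1 : (monomial u a : MvPolynomial (Fin N) K).IsWeightedHomogeneous α
        (Finsupp.weight α u) := isWeightedHomogeneous_monomial _ _ _ rfl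
    rw [weightedHomogeneousComponent_of_mem (hg.mul h1), weightedHomogeneousComponent_of_mem h1]
    split_ifs <;> first | rfl | omega | simp
  | add p q hp hq =>
    rw [mul_add, map_add, hp, hq, map_add]
    split_ifs <;> simp [mul_add]

/-- The ideal `I` is homogeneous for the weights `α`, expressed as closure under taking weighted
homogeneous components. -/
def CompStable (α : Fin N → ℕ) (I : Ideal (MvPolynomial (Fin N) K)) : Prop :=
  ∀ x ∈ I, ∀ D, weightedHomogeneousComponent α D x ∈ I

theorem CompStable.sup_span {α : Fin N → ℕ} {e : ℕ} {g : MvPolynomial (Fin N) K}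
    {I : Ideal (MvPolynomial (Fin N) K)} (hI : CompStable α I)
    (hg : g.IsWeightedHomogeneous α e) : CompStable α (I ⊔ Ideal.span {g}) := by
  intro x hx D
  obtain ⟨y, hy, z, hz, rfl⟩ := Submodule.mem_sup.1 hx
  obtain ⟨r, rfl⟩ := Ideal.mem_span_singleton'.1 hz
  rw [map_add, mul_comm r g, component_mul hg]
  refine add_mem (Ideal.mem_sup_left (hI y hy D)) (Ideal.mem_sup_right ?_)
  split_ifs
  · exact Ideal.mul_mem_right _ _ (Ideal.mem_span_singleton_self g)
  · exact zero_mem _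

/-- The degree `D` part `I_D` of an ideal, as a `K`-subspace of the polynomial ring. -/
noncomputable def gradedPart (α : Fin N → ℕ) (I : Ideal (MvPolynomial (Fin N) K)) (D : ℕ) :
    Submodule K (MvPolynomial (Fin N) K) :=
  I.restrictScalars K ⊓ weightedHomogeneousSubmodule K α D

theorem finite_homogeneous {α : Fin N → ℕ} (hα : ∀ i, 0 < α i) (D : ℕ) :
    FiniteDimensional K (weightedHomogeneousSubmodule K α D) :=
  Module.Finite.iff_fg.2 (weightedHomogeneousSubmodule_fg K α (fun i => (hα i).ne') D)

theorem finite_gradedPart {α : Fin N → ℕ} (hα : ∀ i, 0 < α i)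
    (I : Ideal (MvPolynomial (Fin N) K)) (D : ℕ) : FiniteDimensional K (gradedPart α I D) :=
  have := finite_homogeneous (K := K) hα D
  Submodule.finiteDimensional_of_le inf_le_right

/-- The Hilbert function `dim_K (R/I)_D` of the quotient, written as `dim R_D - dim I_D`. -/
noncomputable def hilb (α : Fin N → ℕ) (I : Ideal (MvPolynomial (Fin N) K)) (D : ℕ) : ℤ :=
  (Module.finrank K (weightedHomogeneousSubmodule K α D) : ℤ) -
    Module.finrank K (gradedPart α I D)

theorem hilb_nonneg {α : Fin N → ℕ} (hα : ∀ i, 0 < α i)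
    (I : Ideal (MvPolynomial (Fin N) K)) (D : ℕ) : 0 ≤ hilb α I D := by
  have := finite_homogeneous (K := K) hα D
  have h : Module.finrank K (gradedPart α I D) ≤
      Module.finrank K (weightedHomogeneousSubmodule K α D) :=
    Submodule.finrank_mono inf_le_right
  unfold hilb
  omega

theorem mem_of_hilb_eq_zero {α : Fin N → ℕ} (hα : ∀ i, 0 < α i)
    {I : Ideal (MvPolynomial (Fin N) K)} {D : ℕ} (h : hilb α I D = 0)
    {x : MvPolynomial (Fin N) K} (hx : x.IsWeightedHomogeneous α D) : x ∈ I := by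
  have := finite_homogeneous (K := K) hα D
  have h1 : gradedPart α I D = weightedHomogeneousSubmodule K α D := by
    refine Submodule.eq_of_le_of_finrank_eq (S₁ := gradedPart α I D) inf_le_right ?_
    unfold hilb at h
    omega
  have h2 : x ∈ gradedPart α I D := h1 ▸ hx
  exact h2.1

/-- If `g` is a form of degree `e` which is a nonzerodivisor modulo the homogeneous ideal `I`, then
`0 → (R/I)_{D-e} → (R/I)_D → (R/(I,g))_D → 0` is exact. At the level of subspaces of `R`:
`(I, g)_D = I_D + g R_{D-e}` and `I_D ∩ g R_{D-e} = g I_{D-e}`. -/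
theorem hilb_sup_span {α : Fin N → ℕ} (hα : ∀ i, 0 < α i) {e : ℕ}
    {g : MvPolynomial (Fin N) K} {I : Ideal (MvPolynomial (Fin N) K)} (hI : CompStable α I)
    (hg : g.IsWeightedHomogeneous α e) (hg0 : g ≠ 0) (hreg : ∀ r, g * r ∈ I → r ∈ I) (D : ℕ) :
    hilb α (I ⊔ Ideal.span {g}) D = hilb α I D - if e ≤ D then hilb α I (D - e) else 0 := by
  have hdec : ∀ x ∈ gradedPart α (I ⊔ Ideal.span {g}) D, ∃ y ∈ gradedPart α I D, ∃ r,
      x = y + if e ≤ D then g * weightedHomogeneousComponent α (D - e) r else 0 := by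
    rintro x ⟨hx, hxD⟩
    obtain ⟨y, hy, z, hz, hyz⟩ := Submodule.mem_sup.1 hx
    obtain ⟨r, rfl⟩ := Ideal.mem_span_singleton'.1 hz
    refine ⟨weightedHomogeneousComponent α D y,
      ⟨hI y hy D, weightedHomogeneousComponent_mem α y D⟩, r, ?_⟩
    rw [← component_mul hg, ← map_add, mul_comm g r, hyz]
    exact (IsWeightedHomogeneous.weightedHomogeneousComponent_same hxD).symm
  have hle : gradedPart α I D ≤ gradedPart α (I ⊔ Ideal.span {g}) D :=
    fun x hx => ⟨Ideal.mem_sup_left hx.1, hx.2⟩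
  split_ifs with he
  · have hinj : Function.Injective (LinearMap.mulLeft K g) := fun a b hab =>
      mul_left_cancel₀ hg0 hab
    have hsup : gradedPart α (I ⊔ Ideal.span {g}) D = gradedPart α I D ⊔
        (weightedHomogeneousSubmodule K α (D - e)).map (LinearMap.mulLeft K g) := by
      apply le_antisymm
      · intro x hx
        obtain ⟨y, hy, r, rfl⟩ := hdec x hx
        rw [if_pos he]
        exact Submodule.add_mem_sup hy
          ⟨_, weightedHomogeneousComponent_mem α r (D - e), rfl⟩
      · refine sup_le hle ?_
        rintro _ ⟨r, hr, rfl⟩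
        refine ⟨Ideal.mem_sup_right
          (Ideal.mul_mem_right _ _ (Ideal.mem_span_singleton_self g)), ?_⟩
        have := hg.mul (show r.IsWeightedHomogeneous α (D - e) from hr)
        rwa [Nat.add_sub_cancel' he] at this
    have hinf : gradedPart α I D ⊓
        (weightedHomogeneousSubmodule K α (D - e)).map (LinearMap.mulLeft K g) =
        (gradedPart α I (D - e)).map (LinearMap.mulLeft K g) := by
      apply le_antisymm
      · rintro _ ⟨hx, r, hr, rfl⟩
        exact ⟨r, ⟨hreg r hx.1, hr⟩, rfl⟩
      · rintro _ ⟨r, hr, rfl⟩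
        refine ⟨⟨Ideal.mul_mem_left _ _ hr.1, ?_⟩, r, hr.2, rfl⟩
        have := hg.mul (show r.IsWeightedHomogeneous α (D - e) from hr.2)
        rwa [Nat.add_sub_cancel' he] at this
    have := finite_gradedPart hα I D
    have := finite_homogeneous (K := K) hα (D - e)
    have key := Submodule.finrank_sup_add_finrank_inf_eq (gradedPart α I D)
      ((weightedHomogeneousSubmodule K α (D - e)).map (LinearMap.mulLeft K g))
    rw [← hsup, hinf, ← (Submodule.equivMapOfInjective _ hinj _).finrank_eq,
      ← (Submodule.equivMapOfInjective _ hinj _).finrank_eq] at key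
    unfold hilb
    omega
  · have : gradedPart α (I ⊔ Ideal.span {g}) D = gradedPart α I D := by
      refine le_antisymm (fun x hx => ?_) hle
      obtain ⟨y, hy, r, rfl⟩ := hdec x hx
      simpa [he] using hy
    rw [hilb, hilb, this, sub_zero]

/-- The Hilbert series of `R/I`. Its coefficients are taken in `ℤ` so that `1 - t^e` makes sense. -/
noncomputable def hilbSeries (α : Fin N → ℕ) (I : Ideal (MvPolynomial (Fin N) K)) :
    PowerSeries ℤ := PowerSeries.mk (hilb α I)

theorem hilbSeries_sup_span {α : Fin N → ℕ} (hα : ∀ i, 0 < α i) {e : ℕ}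
    {g : MvPolynomial (Fin N) K} {I : Ideal (MvPolynomial (Fin N) K)} (hI : CompStable α I)
    (hg : g.IsWeightedHomogeneous α e) (hg0 : g ≠ 0) (hreg : ∀ r, g * r ∈ I → r ∈ I) :
    hilbSeries α (I ⊔ Ideal.span {g}) = hilbSeries α I * (1 - PowerSeries.X ^ e) := by
  ext D
  rw [mul_sub, mul_one, map_sub, PowerSeries.coeff_mul_X_pow']
  simp only [hilbSeries, PowerSeries.coeff_mk]
  exact hilb_sup_span hα hI hg hg0 hreg D

/-- The Hilbert series of the quotient by a regular sequence of forms of degrees `e i`. -/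
theorem hilbSeries_span {α : Fin N → ℕ} (hα : ∀ i, 0 < α i) {M : ℕ} (e : Fin M → ℕ)
    (g : Fin M → MvPolynomial (Fin N) K) (hg : ∀ i, (g i).IsWeightedHomogeneous α (e i))
    (hg0 : ∀ i, g i ≠ 0)
    (hreg : ∀ i r, g i * r ∈ Ideal.span (g '' {j | j < i}) → r ∈ Ideal.span (g '' {j | j < i})) :
    hilbSeries α (Ideal.span (Set.range g)) =
      hilbSeries α (⊥ : Ideal (MvPolynomial (Fin N) K)) * ∏ i, (1 - PowerSeries.X ^ e i) := by
  have main : ∀ k ≤ M, CompStable α (Ideal.span (g '' {j : Fin M | (j : ℕ) < k})) ∧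
      hilbSeries α (Ideal.span (g '' {j : Fin M | (j : ℕ) < k})) =
      hilbSeries α (⊥ : Ideal (MvPolynomial (Fin N) K)) *
        ∏ i ∈ Finset.univ.filter (fun j : Fin M => (j : ℕ) < k), (1 - PowerSeries.X ^ e i) := by
    intro k
    induction k with
    | zero =>
      intro _
      refine ⟨?_, by simp⟩
      intro x hx D
      simp only [Nat.not_lt_zero, Set.ofPred_false, Set.image_empty, Ideal.span_empty,
        Ideal.mem_bot] at hx ⊢
      simp [hx]
    | succ k ih =>
      intro hk
      obtain ⟨h1, h2⟩ := ih (by omega)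
      have hs : {j : Fin M | (j : ℕ) < k + 1} = {j : Fin M | (j : ℕ) < k} ∪ {⟨k, hk⟩} := by
        ext j
        simp [Fin.ext_iff, le_iff_lt_or_eq, or_comm]
      have hf : (Finset.univ.filter fun j : Fin M => (j : ℕ) < k + 1) =
          insert ⟨k, hk⟩ (Finset.univ.filter fun j : Fin M => (j : ℕ) < k) := by
        ext j
        simp [Fin.ext_iff, le_iff_eq_or_lt]
      rw [hs, Set.image_union, Set.image_singleton, Ideal.span_union, hf,
        Finset.prod_insert (by simp)]
      refine ⟨h1.sup_span (hg _), ?_⟩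
      rw [hilbSeries_sup_span hα h1 (hg _) (hg0 _) (hreg ⟨k, hk⟩), h2]
      ring
  have := (main M le_rfl).2
  simpa using this

/-- The Hilbert series of the polynomial ring, obtained from `hilbSeries_span` applied to the
regular sequence of the variables, whose quotient is `K`. -/
theorem hilbSeries_bot_mul {α : Fin N → ℕ} (hα : ∀ i, 0 < α i) :
    hilbSeries α (⊥ : Ideal (MvPolynomial (Fin N) K)) * ∏ i, (1 - PowerSeries.X ^ α i) = 1 := by
  rw [← hilbSeries_span hα α X (fun i => isWeightedHomogeneous_X K α i) (fun i => X_ne_zero i)]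
  · have hmem : ∀ x : MvPolynomial (Fin N) K, x ∈ Ideal.span (Set.range X) ↔ x.coeff 0 = 0 := by
      intro x
      rw [← Set.image_univ, mem_ideal_span_X_image]
      constructor
      · intro h
        by_contra h0
        obtain ⟨i, -, hi⟩ := h 0 (mem_support_iff.2 h0)
        exact hi rfl
      · intro h m hm
        by_contra! hc
        have : m = 0 := by ext i; exact hc i trivial
        exact mem_support_iff.1 hm (this ▸ h)
    ext D
    rw [hilbSeries, PowerSeries.coeff_mk, PowerSeries.coeff_one]
    split_ifs with hD
    · subst hD
      have h1 : weightedHomogeneousSubmodule K α 0 = K ∙ (1 : MvPolynomial (Fin N) K) := by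
        apply le_antisymm
        · intro x hx
          have := IsWeightedHomogeneous.weightedHomogeneousComponent_same
            (show x.IsWeightedHomogeneous α 0 from hx)
          rw [weightedHomogeneousComponent_zero _ (fun i => (hα i).ne')] at this
          exact Submodule.mem_span_singleton.2 ⟨coeff 0 x, by rw [← this]; simp [smul_eq_C_mul]⟩
        · rw [Submodule.span_singleton_le_iff_mem]
          exact isWeightedHomogeneous_one K α
      have h2 : gradedPart α (Ideal.span (Set.range X)) 0 =
          (⊥ : Submodule K (MvPolynomial (Fin N) K)) := by
        rw [eq_bot_iff]
        rintro x ⟨hx, hx'⟩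
        have := IsWeightedHomogeneous.weightedHomogeneousComponent_same
            (show x.IsWeightedHomogeneous α 0 from hx')
        rw [weightedHomogeneousComponent_zero _ (fun i => (hα i).ne'),
          (hmem x).1 hx, C_0] at this
        exact this.symm
      rw [hilb, h1, h2, finrank_span_singleton one_ne_zero]
      simp
    · have : gradedPart α (Ideal.span (Set.range X)) D = weightedHomogeneousSubmodule K α D := by
        refine le_antisymm inf_le_right fun x hx => ⟨(hmem x).2 ?_, hx⟩
        exact IsWeightedHomogeneous.coeff_eq_zero hx 0 (by simpa using Ne.symm hD)
      rw [hilb, this, sub_self]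
  · intro i r
    rw [mem_ideal_span_X_image, mem_ideal_span_X_image]
    intro h m hm
    obtain ⟨j, hj, hjm⟩ := h (Finsupp.single i 1 + m) (by
      rw [mem_support_iff, coeff_X_mul]; exact mem_support_iff.1 hm)
    refine ⟨j, hj, ?_⟩
    have : i ≠ j := fun h => by subst h; simp at hj
    simpa [Finsupp.single_apply, this] using hjm

/-! ### Socle degree of a complete intersection -/

theorem prod_one_sub_pow {M : ℕ} (a : Fin M → ℕ) :
    ∏ i, (1 - PowerSeries.X ^ a i : PowerSeries ℤ) = (1 - PowerSeries.X) ^ M *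
      ((∏ i, ∑ k ∈ Finset.range (a i), Polynomial.X ^ k : Polynomial ℤ) : PowerSeries ℤ) := by
  have h : ((∏ i, ∑ k ∈ Finset.range (a i), Polynomial.X ^ k : Polynomial ℤ) : PowerSeries ℤ) =
      ∏ i, ∑ k ∈ Finset.range (a i), (PowerSeries.X : PowerSeries ℤ) ^ k := by
    rw [← Polynomial.coeToPowerSeries.ringHom_apply]
    simp [map_prod, map_sum]
  rw [h]
  simp_rw [← mul_neg_geom_sum, Finset.prod_mul_distrib]
  simp

/-- A power series `H` with nonnegative coefficients such that `H ∏ (1 - t^{a i}) = ∏ (1 - t^{b i})`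
is a polynomial of degree at most `∑ b i - ∑ a i`. After cancelling `(1 - t)^M` the identity reads
`H P = Q`, where `P` is a monic polynomial with nonnegative coefficients, so no cancellation can
occur in the product `H P`. -/
theorem coeff_eq_zero_of_mul_prod_eq {M : ℕ} (a b : Fin M → ℕ) (ha : ∀ i, 0 < a i)
    (H : PowerSeries ℤ) (hH : ∀ D, 0 ≤ PowerSeries.coeff D H)
    (h : H * ∏ i, (1 - PowerSeries.X ^ a i) = ∏ i, (1 - PowerSeries.X ^ b i))
    (D : ℕ) (hD : ∑ i, b i < D + ∑ i, a i) : PowerSeries.coeff D H = 0 := by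
  set P : Polynomial ℤ := ∏ i, ∑ k ∈ Finset.range (a i), Polynomial.X ^ k with hP
  set Q : Polynomial ℤ := ∏ i, ∑ k ∈ Finset.range (b i), Polynomial.X ^ k with hQ
  have hHP : H * (P : PowerSeries ℤ) = Q := by
    rw [prod_one_sub_pow, prod_one_sub_pow, mul_left_comm] at h
    refine mul_left_cancel₀ (pow_ne_zero _ ?_) h
    intro h0
    simpa using congrArg (PowerSeries.coeff 0) h0
  have hPnonneg : ∀ j, 0 ≤ P.coeff j := by
    have : P = (∏ i, ∑ k ∈ Finset.range (a i), Polynomial.X ^ k : Polynomial ℕ).map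
        (Nat.castRingHom ℤ) := by
      simp [hP, Polynomial.map_prod, Polynomial.map_sum]
    intro j
    rw [this, Polynomial.coeff_map]
    simp
  have hmonic : ∀ i ∈ Finset.univ,
      (∑ k ∈ Finset.range (a i), Polynomial.X ^ k : Polynomial ℤ).Monic :=
    fun i _ => Polynomial.monic_geom_sum_X (ha i).ne'
  have hdeg : ∀ m : ℕ,
      (∑ k ∈ Finset.range m, Polynomial.X ^ k : Polynomial ℤ).natDegree ≤ m - 1 := by
    intro m
    refine Polynomial.natDegree_sum_le_of_forall_le _ _ fun k hk => ?_
    have := Finset.mem_range.1 hk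
    exact (Polynomial.natDegree_X_pow_le k).trans (by omega)
  have hPdeg : ∑ i, a i ≤ P.natDegree + M := by
    have h1 : P.natDegree = ∑ i, (∑ k ∈ Finset.range (a i), Polynomial.X ^ k :
        Polynomial ℤ).natDegree := Polynomial.natDegree_prod_of_monic _ _ hmonic
    have h2 : ∑ i, a i ≤ ∑ i, ((∑ k ∈ Finset.range (a i), Polynomial.X ^ k :
        Polynomial ℤ).natDegree + 1) := by
      refine Finset.sum_le_sum fun i _ => ?_
      have : a i - 1 ≤ (∑ k ∈ Finset.range (a i), Polynomial.X ^ k :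
          Polynomial ℤ).natDegree := by
        apply Polynomial.le_natDegree_of_ne_zero
        have := ha i
        simp [Polynomial.coeff_X_pow, this]
      omega
    rw [Finset.sum_add_distrib, ← h1] at h2
    simpa using h2
  have hQcoeff : Q.coeff (D + P.natDegree) = 0 := by
    by_cases hb : ∃ i, b i = 0
    -- an exponent `b i = 0` makes the right-hand side vanish
    · obtain ⟨i, hi⟩ := hb
      have : Q = 0 := Finset.prod_eq_zero (Finset.mem_univ i) (by simp [hi])
      simp [this]
    · push Not at hb
      apply Polynomial.coeff_eq_zero_of_natDegree_lt
      have h1 : Q.natDegree ≤ ∑ i, (b i - 1) :=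
        (Polynomial.natDegree_prod_le _ _).trans (Finset.sum_le_sum fun i _ => hdeg _)
      have h2 : ∑ i, (b i - 1) + M = ∑ i, b i := by
        have : ∑ i, (b i - 1) + ∑ _i : Fin M, 1 = ∑ i, b i := by
          rw [← Finset.sum_add_distrib]
          exact Finset.sum_congr rfl fun i _ => Nat.sub_add_cancel (Nat.pos_of_ne_zero (hb i))
        simpa using this
      omega
  refine le_antisymm ?_ (hH D)
  -- the top coefficient of `P` is `1`, so `coeff D H` is one of the nonnegative summands of
  -- the coefficient of `H * P` in degree `D + deg P`
  have h1 : PowerSeries.coeff (D + P.natDegree) (H * (P : PowerSeries ℤ)) = 0 := by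
    rw [hHP, Polynomial.coeff_coe, hQcoeff]
  rw [PowerSeries.coeff_mul] at h1
  have h2 := Finset.single_le_sum (s := Finset.HasAntidiagonal.antidiagonal (D + P.natDegree))
    (f := fun x => PowerSeries.coeff x.1 H * PowerSeries.coeff x.2 (P : PowerSeries ℤ))
    (fun x _ => mul_nonneg (hH _) (by rw [Polynomial.coeff_coe]; exact hPnonneg _))
    (Finset.HasAntidiagonal.mem_antidiagonal.2 (rfl : (D, P.natDegree).1 + (D, P.natDegree).2 = _))
  have h3 : P.coeff P.natDegree = 1 := Polynomial.monic_prod_of_monic _ _ hmonic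
  rw [h1] at h2
  simpa [h3] using h2

/-- The quotient of `K[x_1, …, x_N]` by a regular sequence of `N` forms of degrees `e i` vanishes in
all degrees larger than `∑ e i - ∑ α i`. -/
theorem mem_of_large_degree {α : Fin N → ℕ} (hα : ∀ i, 0 < α i) (e : Fin N → ℕ)
    (g : Fin N → MvPolynomial (Fin N) K) (hg : ∀ i, (g i).IsWeightedHomogeneous α (e i))
    (hg0 : ∀ i, g i ≠ 0)
    (hreg : ∀ i r, g i * r ∈ Ideal.span (g '' {j | j < i}) → r ∈ Ideal.span (g '' {j | j < i}))
    {D : ℕ} (hD : ∑ i, e i < D + ∑ i, α i) {x : MvPolynomial (Fin N) K}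
    (hx : x.IsWeightedHomogeneous α D) : x ∈ Ideal.span (Set.range g) := by
  refine mem_of_hilb_eq_zero hα ?_ hx
  have h := coeff_eq_zero_of_mul_prod_eq α e hα (hilbSeries α (Ideal.span (Set.range g)))
    (fun D => by rw [hilbSeries, PowerSeries.coeff_mk]; exact hilb_nonneg hα _ D) ?_ D hD
  · rwa [hilbSeries, PowerSeries.coeff_mk] at h
  · rw [hilbSeries_span hα e g hg hg0 hreg, mul_right_comm, hilbSeries_bot_mul hα, one_mul]

/-! ### The Jacobian ideal -/

/-- The regularity of the sequence of partial derivatives, in terms of ideal membership. -/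
theorem regular_pderiv {n : ℕ} {f : MvPolynomial (Fin (n + 1)) K}
    (hsing : HasIsolatedSingularity f) (i : Fin (n + 1)) (r : MvPolynomial (Fin (n + 1)) K)
    (hr : pderiv i f * r ∈ Ideal.span ((fun j => pderiv j f) '' {j | j < i})) :
    r ∈ Ideal.span ((fun j => pderiv j f) '' {j | j < i}) := by
  have h := hsing.toIsWeaklyRegular.regular_mod_prev i (by simp; omega)
  rw [isSMulRegular_quotient_iff_mem_of_smul_mem] at h
  have hset : (Ideal.ofList (((List.finRange (n + 1)).map fun i => pderiv i f).take i) • ⊤ :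
      Submodule (MvPolynomial (Fin (n + 1)) K) (MvPolynomial (Fin (n + 1)) K)) =
      Ideal.span ((fun j => pderiv j f) '' {j | j < i}) := by
    rw [smul_eq_mul, Ideal.mul_top]
    rw [Ideal.ofList]
    congr 1
    ext x
    simp only [Set.mem_ofPred_eq, Set.mem_image, List.mem_take_iff_getElem]
    constructor
    · rintro ⟨j, hj, rfl⟩
      simp at hj
      exact ⟨⟨j, by omega⟩, Fin.lt_def.2 (by simpa using hj), by simp⟩
    · rintro ⟨j, hj, rfl⟩
      have := Fin.lt_def.1 hj
      exact ⟨j, by simp; omega, by simp⟩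
  rw [hset] at h
  exact h r (by simpa using hr)

theorem span_pderiv_ne_top {n : ℕ} {f : MvPolynomial (Fin (n + 1)) K}
    (hsing : HasIsolatedSingularity f) :
    Ideal.span (Set.range fun j => pderiv j f) ≠ ⊤ := by
  have h := hsing.top_ne_smul
  intro h1
  apply h
  rw [smul_eq_mul, Ideal.mul_top, ← h1]
  congr 1
  ext x
  simp

theorem pderiv_ne_zero {n : ℕ} {f : MvPolynomial (Fin (n + 1)) K}
    (hsing : HasIsolatedSingularity f) (i : Fin (n + 1)) : pderiv i f ≠ 0 := by
  intro h0
  apply span_pderiv_ne_top hsing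
  have h1 := regular_pderiv hsing i 1 (by simp [h0])
  exact (Ideal.eq_top_iff_one _).2 (Ideal.span_mono (Set.image_subset_range _ _) h1)

theorem weight_le_degree {n : ℕ} {α : Fin (n + 1) → ℕ} {d : ℕ}
    {f : MvPolynomial (Fin (n + 1)) K} (hf : f.IsWeightedHomogeneous α d)
    (hsing : HasIsolatedSingularity f) (i : Fin (n + 1)) : α i ≤ d := by
  by_contra! hlt
  apply pderiv_ne_zero hsing i
  apply pderiv_eq_zero_of_notMem_vars
  rw [mem_vars_iff_mem_support]
  rintro ⟨m, hm, hi⟩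
  have h1 := hf (mem_support_iff.1 hm)
  have h2 := Finsupp.le_weight_of_ne_zero' α (Finsupp.mem_support_iff.1 hi)
  omega

/-! ### Frobenius powers -/

/-- `m^{[q]}` is a monomial ideal: membership can be read off from the exponents. -/
theorem mem_frobeniusPower {n q : ℕ} {g : MvPolynomial (Fin (n + 1)) K} :
    g ∈ frobeniusPower K n q ↔ ∀ a ∈ g.support, ∃ i, q ≤ a i := by
  have h : frobeniusPower K n q = Ideal.span ((fun s => monomial s (1 : K)) ''
      (Set.range fun i : Fin (n + 1) => Finsupp.single i q)) := by
    rw [frobeniusPower, ← Set.range_comp]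
    congr 2
    ext1 i
    simp [X_pow_eq_monomial]
  rw [h, mem_ideal_span_monomial_image]
  simp [Finsupp.single_le_iff]

/-- When `q = 0` in `K`, the generators `x_i^q` have zero derivative, so `m^{[q]}` is stable under
partial derivatives. -/
theorem pderiv_mem_frobeniusPower {n q : ℕ} (hq : (q : K) = 0)
    {g : MvPolynomial (Fin (n + 1)) K} (hg : g ∈ frobeniusPower K n q) (i : Fin (n + 1)) :
    pderiv i g ∈ frobeniusPower K n q := by
  have hq' : (q : MvPolynomial (Fin (n + 1)) K) = 0 := by
    rw [← map_natCast C q, hq, C_0]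
  refine Submodule.span_induction ?_ ?_ (fun x y _ _ hx hy => ?_) (fun a x hxm hx => ?_) hg
  · rintro _ ⟨j, rfl⟩
    simp [Derivation.leibniz_pow, hq']
  · simp
  · rw [map_add]
    exact add_mem hx hy
  · rw [smul_eq_mul, Derivation.leibniz, smul_eq_mul, smul_eq_mul]
    exact add_mem (Ideal.mul_mem_left _ _ hx) (Ideal.mul_mem_right _ _ hxm)

/-- Flatness of Frobenius for the ideals `m^{[q]}`. -/
theorem pow_mem_frobeniusPower_iff {n q p : ℕ} [Fact p.Prime] [CharP K p]
    {g : MvPolynomial (Fin (n + 1)) K} :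
    g ^ p ∈ frobeniusPower K n (p * q) ↔ g ∈ frobeniusPower K n q := by
  have hp := (Fact.out : p.Prime)
  have hcoeff : ∀ a, coeff (p • a) (g ^ p) = coeff a g ^ p := by
    intro a
    rw [← map_frobenius_expand p, coeff_map, coeff_expand_smul _ hp.ne_zero, frobenius_def]
  constructor
  · intro h
    rw [mem_frobeniusPower] at h ⊢
    intro a ha
    obtain ⟨i, hi⟩ := h (p • a) (by
      rw [mem_support_iff, hcoeff]
      exact pow_ne_zero _ (mem_support_iff.1 ha))
    exact ⟨i, Nat.le_of_mul_le_mul_left (by simpa using hi) hp.pos⟩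
  · intro h
    refine Submodule.span_induction (p := fun g _ => g ^ p ∈ frobeniusPower K n (p * q))
      ?_ ?_ (fun x y _ _ hx hy => ?_) (fun a x _ hx => ?_) h
    · rintro _ ⟨j, rfl⟩
      simp only
      rw [← pow_mul, mul_comm q p]
      exact Ideal.subset_span ⟨j, rfl⟩
    · simp [hp.ne_zero]
    · rw [add_pow_char]
      exact add_mem hx hy
    · rw [smul_eq_mul, mul_pow]
      exact Ideal.mul_mem_left _ _ hx

/-! ### The behaviour of `μ_f` under Frobenius -/

/-- If `k + 1` is the least exponent with `f^(k+1) ∈ m^{[q]}` and it is invertible in `K`, then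
`d (k + 1) ≥ w q + w - n d`. Differentiating shows that `f^k` multiplies the Jacobian ideal into
`m^{[q]}`. The Jacobian ideal contains all forms of degree larger than `(n + 1) d - 2 w`, whereas
some monomial of `f^k` outside `m^{[q]}` can be completed to the socle generator
`(x_0 ⋯ x_n)^(q-1)` of `R / m^{[q]}`, of degree `(q - 1) w`. -/
theorem degree_bound {n : ℕ} {α : Fin (n + 1) → ℕ} (hα : ∀ i, 0 < α i) {d : ℕ}
    {f : MvPolynomial (Fin (n + 1)) K} (hf : f.IsWeightedHomogeneous α d)
    (hsing : HasIsolatedSingularity f) {q k : ℕ} (hq : (q : K) = 0) (hk : ((k + 1 : ℕ) : K) ≠ 0)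
    (hmem : f ^ (k + 1) ∈ frobeniusPower K n q) (hnot : f ^ k ∉ frobeniusPower K n q) :
    (∑ i, α i) * q + ∑ i, α i ≤ d * (k + 1) + n * d := by
  have hle := weight_le_degree hf hsing
  have hpd : ∀ i, (pderiv i f).IsWeightedHomogeneous α (d - α i) := fun i =>
    hf.pderiv (Nat.sub_add_cancel (hle i))
  have hsum : ∑ i, (d - α i) + ∑ i, α i = (n + 1) * d := by
    rw [← Finset.sum_add_distrib,
      Finset.sum_congr rfl fun i _ => Nat.sub_add_cancel (hle i)]
    simp
  have hcolon : ∀ x ∈ Ideal.span (Set.range fun j => pderiv j f),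
      f ^ k * x ∈ frobeniusPower K n q := by
    intro x hx
    refine Submodule.span_induction ?_ ?_ (fun x y _ _ hx hy => ?_) (fun a x _ hx => ?_) hx
    · rintro _ ⟨j, rfl⟩
      have h1 := pderiv_mem_frobeniusPower hq hmem j
      rw [Derivation.leibniz_pow, Nat.add_sub_cancel] at h1
      have h2 := Ideal.mul_mem_left _ (C ((k + 1 : ℕ) : K)⁻¹) h1
      rw [nsmul_eq_mul, ← map_natCast C (k + 1), ← mul_assoc, ← C_mul, inv_mul_cancel₀ hk, C_1,
        one_mul] at h2
      exact h2
    · simp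
    · rw [mul_add]
      exact add_mem hx hy
    · rw [smul_eq_mul, mul_left_comm]
      exact Ideal.mul_mem_left _ _ hx
  rw [mem_frobeniusPower] at hnot
  push Not at hnot
  obtain ⟨a, ha, haq⟩ := hnot
  have hwa : Finsupp.weight α a = k * d := by
    simpa using hf.pow k (mem_support_iff.1 ha)
  -- the complementary exponent: `x^a x^b = (x_0 ⋯ x_n)^(q-1)`
  let b : Fin (n + 1) →₀ ℕ := Finsupp.equivFunOnFinite.symm fun i => q - 1 - a i
  have hab : ∀ i, b i + a i + 1 = q := by
    intro i
    have := haq i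
    simp [b]
    omega
  have hwab : Finsupp.weight α b + k * d + ∑ i, α i = (∑ i, α i) * q := by
    rw [← hwa, ← map_add, Finsupp.weight_apply, Finsupp.sum_fintype _ _ (by simp),
      ← Finset.sum_add_distrib, Finset.sum_mul]
    refine Finset.sum_congr rfl fun i _ => ?_
    rw [← hab i]
    simp
    ring
  by_contra! hlt
  have hb : monomial b (1 : K) ∈ Ideal.span (Set.range fun j => pderiv j f) :=
    mem_of_large_degree hα (fun i => d - α i) _ hpd (pderiv_ne_zero hsing)
      (regular_pderiv hsing) (by nlinarith) (isWeightedHomogeneous_monomial α b 1 rfl)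
  obtain ⟨i, hi⟩ := mem_frobeniusPower.1 (hcolon _ hb) (a + b) (by
    rw [mem_support_iff, coeff_mul_monomial, mul_one]
    exact mem_support_iff.1 ha)
  have := hab i
  simp at hi
  omega

theorem pow_muF_mem {n : ℕ} {α : Fin (n + 1) → ℕ} (hα : ∀ i, 0 < α i) {d : ℕ}
    {f : MvPolynomial (Fin (n + 1)) K} (hf : f.IsWeightedHomogeneous α d)
    (hsing : HasIsolatedSingularity f) (p e : ℕ) [Fact p.Prime] [CharP K p] :
    f ^ muF f (p ^ e) ∈ frobeniusPower K n (p ^ e) := by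
  have hd : d ≠ 0 := ((hα 0).trans_le (weight_le_degree hf hsing 0)).ne'
  apply Nat.sInf_mem (s := {k : ℕ | f ^ k ∈ frobeniusPower K n (p ^ e)})
  refine ⟨p ^ e, ?_⟩
  simp only [Set.mem_ofPred_eq]
  induction e with
  | zero =>
    rw [pow_zero, pow_one, mem_frobeniusPower]
    intro a ha
    have := hf (mem_support_iff.1 ha)
    by_contra! hc
    have h0 : a = 0 := by
      ext i
      have := hc i
      simp; omega
    rw [h0, map_zero] at this
    exact hd this.symm
  | succ e ih =>
    rw [pow_succ' p, mul_comm p, pow_mul, mul_comm, pow_mem_frobeniusPower_iff]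
    exact ih

theorem pow_mem_iff_muF_le {n q : ℕ} {f : MvPolynomial (Fin (n + 1)) K}
    (h : f ^ muF f q ∈ frobeniusPower K n q) (k : ℕ) :
    f ^ k ∈ frobeniusPower K n q ↔ muF f q ≤ k :=
  ⟨fun hk => Nat.sInf_le hk, fun hk => Ideal.mem_of_dvd _ (pow_dvd_pow f hk) h⟩

/-- One Frobenius step. Otherwise `μ_f(pq)` lies strictly between `p (μ_f(q) - 1)` and `p μ_f(q)`,
so it is prime to `p`, and the lower bound `degree_bound` contradicts
`d (p μ_f(q) - 1) ≤ p (w q - 1) - d`. -/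
theorem muF_mul {n p : ℕ} [Fact p.Prime] [CharP K p] {α : Fin (n + 1) → ℕ}
    (hα : ∀ i, 0 < α i) {d : ℕ} {f : MvPolynomial (Fin (n + 1)) K}
    (hf : f.IsWeightedHomogeneous α d) (hsing : HasIsolatedSingularity f)
    (hp : (n : ℤ) * d - d - (∑ i, α i : ℕ) + 1 ≤ (p : ℤ)) (e : ℕ)
    (h : d * muF f (p ^ e) < (∑ i, α i) * p ^ e) :
    muF f (p * p ^ e) = p * muF f (p ^ e) := by
  have hmem := pow_mem_iff_muF_le (pow_muF_mem hα hf hsing p e)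
  have hmemp := pow_mem_iff_muF_le (pow_muF_mem hα hf hsing p (e + 1))
  rw [pow_succ'] at hmemp
  generalize p ^ e = q at *
  generalize muF f q = m at *
  generalize muF f (p * q) = mp at *
  have hfrob : ∀ k, p * k < mp ↔ k < m := by
    intro k
    rw [← not_le, ← not_le, ← hmem, ← hmemp, mul_comm p k, pow_mul, pow_mem_frobeniusPower_iff]
  have hle : mp ≤ p * m := not_lt.1 fun hlt => lt_irrefl _ ((hfrob m).1 hlt)
  by_contra hne
  have hlt : mp < p * m := lt_of_le_of_ne hle hne
  have hm : m ≠ 0 := by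
    rintro rfl
    simp at hlt
  obtain ⟨l, rfl⟩ := Nat.exists_eq_succ_of_ne_zero hm
  have hl : p * l < mp := (hfrob l).2 (Nat.lt_succ_self l)
  obtain ⟨k, rfl⟩ := Nat.exists_eq_succ_of_ne_zero (by omega : mp ≠ 0)
  -- `k + 1 = μ_f(pq)` lies strictly between the consecutive multiples `p * l` and `p * (l + 1)` of `p`
  have hk : ((k + 1 : ℕ) : K) ≠ 0 := by
    rw [Ne, CharP.cast_eq_zero_iff K p]
    rintro ⟨c, hc⟩
    simp only [Nat.succ_eq_add_one, hc] at hl hlt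
    have h1 := Nat.lt_of_mul_lt_mul_left hl
    have h2 := Nat.lt_of_mul_lt_mul_left hlt
    omega
  have hb := degree_bound hα hf hsing (q := p * q) (k := k) (by simp) hk ((hmemp _).2 le_rfl)
    (fun hc => by have := (hmemp _).1 hc; omega)
  simp only [Nat.succ_eq_add_one] at h hlt
  generalize ∑ i, α i = w at *
  have h1 : d * (k + 2) ≤ d * (p * (l + 1)) := Nat.mul_le_mul_left d hlt
  have h2 : p * (d * (l + 1) + 1) ≤ p * (w * q) := Nat.mul_le_mul_left p h
  zify at hb h1 h2
  linarith

end QuasiHomogeneous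

/-- if `f` is quasi-homogeneous of degree `d` and type `α` with an isolated
singularity, `p ≥ nd − d − w + 1`, and `d·μ_f(q) < w·q` for some `q = p^e`, then
`μ_f(pq) = p·μ_f(q)`; in particular `μ_f(p^e')/p^e'` is constant for `p^e' ≥ q`. -/
theorem statement7 {K : Type*} [Field K] {p : ℕ} [Fact p.Prime] [CharP K p] {n : ℕ}
    (α : Fin (n + 1) → ℕ) (hα : ∀ i, 0 < α i) (d w : ℕ) (hw : w = ∑ i, α i)
    (f : MvPolynomial (Fin (n + 1)) K)
    (hf : f.IsWeightedHomogeneous α d)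
    (hsing : HasIsolatedSingularity f)
    (hp : (n : ℤ) * d - d - w + 1 ≤ (p : ℤ))
    (e : ℕ) (q : ℕ) (hq : q = p ^ e)
    (h : d * muF f q < w * q) :
    muF f (p * q) = p * muF f q ∧
      ∀ e' : ℕ, q ≤ p ^ e' →
        (muF f (p ^ e') : ℚ) / ((p : ℚ) ^ e') = (muF f q : ℚ) / (q : ℚ) := by
  subst hw hq
  have hstep := QuasiHomogeneous.muF_mul hα hf hsing hp
  refine ⟨hstep e h, fun e' he' => ?_⟩
  have hp1 : 1 < p := (Fact.out : p.Prime).one_lt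
  obtain ⟨j, rfl⟩ := Nat.exists_eq_add_of_le ((Nat.pow_le_pow_iff_right hp1).1 he')
  have hmu : muF f (p ^ (e + j)) = p ^ j * muF f (p ^ e) := by
    clear he'
    induction j with
    | zero => simp
    | succ j ih =>
      rw [← add_assoc, pow_succ', hstep, ih, pow_succ', mul_assoc]
      rw [ih, pow_add]
      have hpj : 0 < p ^ j := Nat.pow_pos (Nat.zero_lt_of_lt hp1)
      linarith [Nat.mul_lt_mul_of_pos_left h hpj]
  have hp0 : (p : ℚ) ≠ 0 := by positivity
  rw [hmu]
  push_cast
  rw [pow_add]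
  field_simp
end

section
/- Let f ∈ R = K[x_0, …, x_n] be a quasi-homogeneous polynomial of type α whose degree equals w = α_0 + ⋯ + α_n, with an isolated singularity. Then μ_f(p) = p − h for an integer h with 0 ≤ h ≤ n − 1; that is, p − (n − 1) ≤ μ_f(p) ≤ p. -/
/-!
Write `μ = μ_f(p)`. Since `f ∈ m`, Frobenius gives `f^p ∈ m^{[p]}`, so `μ ≤ p`. Assume `μ < p`.
The ideal `m^{[p]}` is stable under partial derivatives in characteristic `p`, so differentiating
`f^μ ∈ m^{[p]}` shows that the Jacobian ideal `J` multiplies `f^(μ-1) ∉ m^{[p]}` into `m^{[p]}`.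

Some monomial `x^m` of `f^(μ-1)` has all exponents at most `p - 1`. Its complement `x^t` in
`(x_0 ⋯ x_n)^(p-1)` has weighted degree `(p-1)w - (μ-1)w = (p-μ)w`, and `x^t f^(μ-1) ∉ m^{[p]}`.
Hence `x^t ∉ J`. But `J` is generated by a regular sequence of degrees `w - α_i`, so it contains
everything of degree greater than `∑ (w - α_i) - ∑ α_i = (n-1)w` (`mem_of_large_degree`), and
therefore `p - μ ≤ n - 1`.

The socle degree bound is obtained from Hilbert series (`hilbertSeries_span_range`). Comparing the
regular sequence `g_i` of degrees `d_i` with the regular sequence `x_i`, whose quotient has a constant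
Hilbert series `c`, and cancelling powers of `1 - t`, gives
`H · ∏ (1 + ⋯ + t^(α_i - 1)) = c · ∏ (1 + ⋯ + t^(d_i - 1))`, where `H` is the Hilbert series of
`R ⧸ (g_0, …, g_n)`. All coefficients on the left are nonnegative, so a nonzero coefficient of `H` in
degree `k` forces `k + ∑ (α_i - 1) ≤ ∑ (d_i - 1)`. No dimension theory is needed.
-/

open MvPolynomial Filter Topology

/-! ### Hilbert series of quotients by regular sequences -/

section HilbertSeries

variable {K : Type*} [Field K] {n : ℕ}

/-- The weighted degree `k` part of the ideal `I`, as a `K`-subspace of `R`. -/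
noncomputable def gradedPart (α : Fin (n + 1) → ℕ) (I : Ideal (MvPolynomial (Fin (n + 1)) K))
    (k : ℕ) : Submodule K (MvPolynomial (Fin (n + 1)) K) :=
  weightedHomogeneousSubmodule K α k ⊓ I.restrictScalars K

/-- The Hilbert series of `R ⧸ I` for the grading of type `α`. The dimension of the degree `k` part
of the quotient is encoded as `dim R_k - dim (I ∩ R_k)`, computed in `ℤ`. -/
noncomputable def hilbertSeries (α : Fin (n + 1) → ℕ)
    (I : Ideal (MvPolynomial (Fin (n + 1)) K)) : PowerSeries ℤ :=
  PowerSeries.mk fun k =>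
    (Module.finrank K (weightedHomogeneousSubmodule K α k) : ℤ) -
      (Module.finrank K (gradedPart α I k) : ℤ)

/-- `I` is a homogeneous ideal for the grading of type `α`: it contains the weighted homogeneous
components of its elements. -/
def ComponentClosed (α : Fin (n + 1) → ℕ) (I : Ideal (MvPolynomial (Fin (n + 1)) K)) : Prop :=
  ∀ r ∈ I, ∀ k, weightedHomogeneousComponent α k r ∈ I

lemma finite_weightedHomogeneousSubmodule (α : Fin (n + 1) → ℕ) (hα : ∀ i, 0 < α i) (k : ℕ) :
    Module.Finite K (weightedHomogeneousSubmodule K α k) :=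
  Module.Finite.iff_fg.mpr (weightedHomogeneousSubmodule_fg K α (fun i => (hα i).ne') k)

lemma gradedPart_le (α : Fin (n + 1) → ℕ) (I : Ideal (MvPolynomial (Fin (n + 1)) K)) (k : ℕ) :
    gradedPart α I k ≤ weightedHomogeneousSubmodule K α k := inf_le_left

lemma coeff_hilbertSeries_nonneg (α : Fin (n + 1) → ℕ) (hα : ∀ i, 0 < α i)
    (I : Ideal (MvPolynomial (Fin (n + 1)) K)) (k : ℕ) :
    0 ≤ PowerSeries.coeff k (hilbertSeries α I) := by
  have := finite_weightedHomogeneousSubmodule (K := K) α hα k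
  have h := Submodule.finrank_mono (gradedPart_le α I k)
  simp only [hilbertSeries, PowerSeries.coeff_mk]
  omega

lemma mem_of_coeff_hilbertSeries_eq_zero (α : Fin (n + 1) → ℕ) (hα : ∀ i, 0 < α i)
    (I : Ideal (MvPolynomial (Fin (n + 1)) K)) (k : ℕ)
    (h : PowerSeries.coeff k (hilbertSeries α I) = 0)
    (r : MvPolynomial (Fin (n + 1)) K) (hr : r.IsWeightedHomogeneous α k) : r ∈ I := by
  have := finite_weightedHomogeneousSubmodule (K := K) α hα k
  simp only [hilbertSeries, PowerSeries.coeff_mk] at h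
  have he := Submodule.eq_of_le_of_finrank_eq (gradedPart_le α I k) (by omega)
  have hm : r ∈ gradedPart α I k := he ▸ hr
  exact hm.2

lemma component_mul (α : Fin (n + 1) → ℕ) {g : MvPolynomial (Fin (n + 1)) K} {d : ℕ}
    (hg : g.IsWeightedHomogeneous α d) (b : MvPolynomial (Fin (n + 1)) K) (k : ℕ) :
    weightedHomogeneousComponent α k (g * b) =
      if d ≤ k then g * weightedHomogeneousComponent α (k - d) b else 0 := by
  have hb := sum_weightedHomogeneousComponent α b
  have hfin := weightedHomogeneousComponent_finsupp (w := α) b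
  have key : ∀ j, weightedHomogeneousComponent α k (g * weightedHomogeneousComponent α j b) =
      if k = d + j then g * weightedHomogeneousComponent α j b else 0 := fun j =>
    weightedHomogeneousComponent_of_mem
      (hg.mul (weightedHomogeneousComponent_isWeightedHomogeneous j b))
  conv_lhs => rw [← hb]
  rw [finsum_eq_sum _ hfin, Finset.mul_sum, map_sum]
  simp_rw [key]
  split_ifs with hdk
  · rw [Finset.sum_eq_single (k - d)]
    · rw [if_pos (by omega)]
    · intro j _ hj
      rw [if_neg (by omega)]
    · intro hj
      have : weightedHomogeneousComponent α (k - d) b = 0 := by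
        by_contra h0
        exact hj (hfin.mem_toFinset.mpr h0)
      simp [this]
  · exact Finset.sum_eq_zero fun j _ => if_neg (by omega)

lemma ComponentClosed.sup_span {α : Fin (n + 1) → ℕ} {I : Ideal (MvPolynomial (Fin (n + 1)) K)}
    (hI : ComponentClosed α I) {g : MvPolynomial (Fin (n + 1)) K} {d : ℕ}
    (hg : g.IsWeightedHomogeneous α d) : ComponentClosed α (I ⊔ Ideal.span {g}) := by
  intro r hr k
  obtain ⟨a, ha, c, hc, rfl⟩ := Submodule.mem_sup.mp hr
  obtain ⟨b, rfl⟩ := Ideal.mem_span_singleton'.mp hc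
  rw [map_add, mul_comm b, component_mul α hg]
  refine add_mem (Ideal.mem_sup_left (hI a ha k)) ?_
  split_ifs
  · exact Ideal.mem_sup_right (Ideal.mul_mem_right _ _ (Ideal.mem_span_singleton_self g))
  · exact zero_mem _

/-- In degree `k` one has `(I + (g))_k = I_k + g R_{k-d}`, the last term being absent if `k < d`. -/
lemma gradedPart_sup_span {α : Fin (n + 1) → ℕ} {I : Ideal (MvPolynomial (Fin (n + 1)) K)}
    (hI : ComponentClosed α I) {g : MvPolynomial (Fin (n + 1)) K} {d : ℕ}
    (hg : g.IsWeightedHomogeneous α d) (k : ℕ) :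
    gradedPart α (I ⊔ Ideal.span {g}) k = gradedPart α I k ⊔
      if d ≤ k then (weightedHomogeneousSubmodule K α (k - d)).map (LinearMap.mulLeft K g)
      else ⊥ := by
  apply le_antisymm
  · rintro r ⟨hrk, hr⟩
    obtain ⟨a, ha, c, hc, rfl⟩ := Submodule.mem_sup.mp hr
    obtain ⟨b, rfl⟩ := Ideal.mem_span_singleton'.mp hc
    have h := weightedHomogeneousComponent_eq_self hrk
    rw [← h, map_add, mul_comm b, component_mul α hg]
    refine Submodule.add_mem_sup ⟨weightedHomogeneousComponent_mem _ _ _, hI a ha k⟩ ?_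
    split_ifs
    · exact ⟨_, weightedHomogeneousComponent_mem _ _ _, rfl⟩
    · exact zero_mem _
  · refine sup_le (fun r hr => ⟨hr.1, Ideal.mem_sup_left hr.2⟩) ?_
    split_ifs with hdk
    · rintro _ ⟨b, hb, rfl⟩
      refine ⟨?_, Ideal.mem_sup_right (Ideal.mul_mem_right _ _ (Ideal.mem_span_singleton_self g))⟩
      have := IsWeightedHomogeneous.mul hg hb
      rwa [Nat.add_sub_cancel' hdk] at this
    · exact bot_le

/-- Additivity of dimensions along
`0 → (R ⧸ I)(-d) → R ⧸ I → R ⧸ (I + (g)) → 0`, exact because `g` is a nonzerodivisor modulo `I`. -/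
lemma hilbertSeries_sup_span {α : Fin (n + 1) → ℕ} (hα : ∀ i, 0 < α i)
    {I : Ideal (MvPolynomial (Fin (n + 1)) K)}
    (hI : ComponentClosed α I) {g : MvPolynomial (Fin (n + 1)) K} {d : ℕ}
    (hg : g.IsWeightedHomogeneous α d) (hreg : ∀ r, g * r ∈ I → r ∈ I) :
    hilbertSeries α (I ⊔ Ideal.span {g}) = hilbertSeries α I * (1 - PowerSeries.X ^ d) := by
  ext k
  rw [mul_sub, mul_one, map_sub, PowerSeries.coeff_mul_X_pow']
  simp only [hilbertSeries, PowerSeries.coeff_mk]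
  have hsup := gradedPart_sup_span hI hg k
  split_ifs at hsup ⊢ with hdk
  · rw [hsup]
    have f1 := finite_weightedHomogeneousSubmodule (K := K) α hα k
    have f2 := finite_weightedHomogeneousSubmodule (K := K) α hα (k - d)
    have f3 : Module.Finite K (gradedPart α I k) :=
      Submodule.finiteDimensional_of_le (gradedPart_le α I k)
    have hinf : gradedPart α I k ⊓
        (weightedHomogeneousSubmodule K α (k - d)).map (LinearMap.mulLeft K g) =
        (gradedPart α I (k - d)).map (LinearMap.mulLeft K g) := by
      apply le_antisymm
      · rintro _ ⟨⟨_, h2⟩, ⟨b, hb, rfl⟩⟩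
        exact ⟨b, ⟨hb, hreg b h2⟩, rfl⟩
      · rintro _ ⟨b, ⟨hb, hbI⟩, rfl⟩
        refine ⟨⟨?_, Ideal.mul_mem_left _ _ hbI⟩, ⟨b, hb, rfl⟩⟩
        have := IsWeightedHomogeneous.mul hg hb
        rwa [Nat.add_sub_cancel' hdk] at this
    have hsum := Submodule.finrank_sup_add_finrank_inf_eq (gradedPart α I k)
      ((weightedHomogeneousSubmodule K α (k - d)).map (LinearMap.mulLeft K g))
    rw [hinf] at hsum
    by_cases hg0 : g = 0
    · -- regularity of `0` modulo `I` forces `I = ⊤`, so both shifted terms coincide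
      have htop : gradedPart α I (k - d) = weightedHomogeneousSubmodule K α (k - d) :=
        le_antisymm (gradedPart_le _ _ _) fun r hr => ⟨hr, hreg r (by simp [hg0])⟩
      rw [htop] at hsum ⊢
      omega
    · have hinj : Function.Injective (LinearMap.mulLeft K g) := fun a b h =>
        mul_left_cancel₀ hg0 h
      have hmap (S : Submodule K (MvPolynomial (Fin (n + 1)) K)) :
          Module.finrank K (S.map (LinearMap.mulLeft K g)) = Module.finrank K S :=
        (Submodule.equivMapOfInjective _ hinj S).finrank_eq.symm
      rw [hmap, hmap] at hsum
      omega
  · rw [hsup, sup_bot_eq, sub_zero]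

lemma hilbertSeries_span_range {α : Fin (n + 1) → ℕ} (hα : ∀ i, 0 < α i)
    (g : Fin (n + 1) → MvPolynomial (Fin (n + 1)) K) (d : Fin (n + 1) → ℕ)
    (hg : ∀ i, (g i).IsWeightedHomogeneous α (d i))
    (hreg : ∀ i r, g i * r ∈ Ideal.span (g '' {j | j < i}) → r ∈ Ideal.span (g '' {j | j < i})) :
    hilbertSeries α (Ideal.span (Set.range g)) =
      hilbertSeries α (⊥ : Ideal (MvPolynomial (Fin (n + 1)) K)) *
        ∏ i, (1 - PowerSeries.X ^ d i) := by
  have key : ∀ m ≤ n + 1, ComponentClosed α (Ideal.span (g '' {j | j.val < m})) ∧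
      hilbertSeries α (Ideal.span (g '' {j | j.val < m})) =
      hilbertSeries α (⊥ : Ideal (MvPolynomial (Fin (n + 1)) K)) *
        ∏ i with i.val < m, (1 - PowerSeries.X ^ d i) := by
    intro m
    induction m with
    | zero =>
      intro _
      have hb : Ideal.span (g '' {j | j.val < 0}) = ⊥ := by simp
      rw [hb]
      refine ⟨?_, by simp⟩
      intro r hr k
      simp [Ideal.mem_bot.mp hr]
    | succ m ih =>
      intro hm
      obtain ⟨ih1, ih2⟩ := ih (by omega)
      let i : Fin (n + 1) := ⟨m, by omega⟩
      have hset : {j : Fin (n + 1) | j.val < m + 1} = {j | j.val < m} ∪ {i} := by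
        ext j
        simp only [Set.mem_ofPred_eq, Set.mem_union, Set.mem_singleton_iff, Fin.ext_iff, i]
        omega
      have hfin : Finset.univ.filter (fun j : Fin (n + 1) => j.val < m + 1) =
          insert i (Finset.univ.filter (fun j : Fin (n + 1) => j.val < m)) := by
        ext j
        simp only [Finset.mem_filter, Finset.mem_univ, true_and, Finset.mem_insert, Fin.ext_iff, i]
        omega
      rw [hset, Set.image_union, Set.image_singleton, Ideal.span_union]
      refine ⟨ih1.sup_span (hg i), ?_⟩
      rw [hilbertSeries_sup_span hα ih1 (hg i) (hreg i), ih2, hfin,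
        Finset.prod_insert (by simp [i])]
      ring
  have h := (key (n + 1) le_rfl).2
  have hset : {j : Fin (n + 1) | j.val < n + 1} = Set.univ := by
    ext j
    simpa using Nat.le_of_lt_succ j.2
  have hfin : Finset.univ.filter (fun j : Fin (n + 1) => j.val < n + 1) = Finset.univ := by
    ext j
    simpa using Nat.le_of_lt_succ j.2
  rwa [hset, Set.image_univ, hfin] at h

end HilbertSeries

lemma X_regular {K : Type*} [Field K] {n : ℕ} (i : Fin (n + 1))
    (r : MvPolynomial (Fin (n + 1)) K)
    (hr : X i * r ∈ Ideal.span ((X : Fin (n + 1) → MvPolynomial (Fin (n + 1)) K) '' {j | j < i})) :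
    r ∈ Ideal.span ((X : Fin (n + 1) → MvPolynomial (Fin (n + 1)) K) '' {j | j < i}) := by
  rw [mem_ideal_span_X_image] at hr ⊢
  intro m hm
  obtain ⟨j, hj, hmj⟩ := hr (Finsupp.single i 1 + m) (by
    rw [mem_support_iff, coeff_X_mul]
    exact mem_support_iff.mp hm)
  refine ⟨j, hj, ?_⟩
  have hne : i ≠ j := (ne_of_gt hj)
  simpa [Finsupp.single_apply, hne] using hmj

lemma mem_span_X {K : Type*} [Field K] {n : ℕ} {α : Fin (n + 1) → ℕ} {k : ℕ}
    (hk : k ≠ 0) {r : MvPolynomial (Fin (n + 1)) K} (hr : r.IsWeightedHomogeneous α k) :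
    r ∈ Ideal.span (Set.range (X : Fin (n + 1) → MvPolynomial (Fin (n + 1)) K)) := by
  rw [← Set.image_univ, mem_ideal_span_X_image]
  intro m hm
  by_contra! hcon
  have hm0 : m = 0 := Finsupp.ext fun i => hcon i trivial
  have := hr (mem_support_iff.mp hm)
  rw [hm0, map_zero] at this
  exact hk this.symm

/-- The quotient by the ideal of the variables lives in degree `0`. -/
lemma coeff_hilbertSeries_vars {K : Type*} [Field K] {n : ℕ} (α : Fin (n + 1) → ℕ) {k : ℕ}
    (hk : k ≠ 0) : PowerSeries.coeff k (hilbertSeries α (Ideal.span (Set.range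
      (X : Fin (n + 1) → MvPolynomial (Fin (n + 1)) K)))) = 0 := by
  have : gradedPart α (Ideal.span (Set.range
      (X : Fin (n + 1) → MvPolynomial (Fin (n + 1)) K))) k =
      weightedHomogeneousSubmodule K α k := by
    exact le_antisymm (gradedPart_le _ _ _) fun r hr => ⟨hr, mem_span_X hk hr⟩
  rw [hilbertSeries, PowerSeries.coeff_mk, this, sub_self]

/-! ### Products of the polynomials `1 + t + ⋯ + t^(d-1)` -/

section PowerSeries

lemma coeff_geom (d k : ℕ) :
    PowerSeries.coeff k (∑ j ∈ Finset.range d, (PowerSeries.X : PowerSeries ℤ) ^ j) =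
      if k < d then 1 else 0 := by
  simp [PowerSeries.coeff_X_pow]

/-- All coefficients of `A` are nonnegative and the one of degree `N` is positive. -/
def PosAt (A : PowerSeries ℤ) (N : ℕ) : Prop :=
  (∀ k, 0 ≤ PowerSeries.coeff k A) ∧ 0 < PowerSeries.coeff N A

lemma PosAt.mul {A B : PowerSeries ℤ} {M N : ℕ} (hA : PosAt A M) (hB : PosAt B N) :
    PosAt (A * B) (M + N) := by
  refine ⟨fun k => ?_, ?_⟩
  · rw [PowerSeries.coeff_mul]
    exact Finset.sum_nonneg fun x _ => mul_nonneg (hA.1 _) (hB.1 _)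
  · rw [PowerSeries.coeff_mul]
    refine Finset.sum_pos' (fun x _ => mul_nonneg (hA.1 _) (hB.1 _)) ⟨(M, N), by simp, ?_⟩
    exact mul_pos hA.2 hB.2

lemma posAt_prod_geom {ι : Type*} (s : Finset ι) (a : ι → ℕ) (ha : ∀ i, 0 < a i) :
    PosAt (∏ i ∈ s, ∑ j ∈ Finset.range (a i), (PowerSeries.X : PowerSeries ℤ) ^ j)
      (∑ i ∈ s, (a i - 1)) := by
  classical
  induction s using Finset.induction_on with
  | empty =>
    refine ⟨fun k => ?_, by simp⟩
    simp only [Finset.prod_empty, PowerSeries.coeff_one]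
    split_ifs <;> norm_num
  | insert i s hi ih =>
    rw [Finset.prod_insert hi, Finset.sum_insert hi]
    refine PosAt.mul ⟨fun k => ?_, ?_⟩ ih
    · rw [coeff_geom]
      split_ifs <;> norm_num
    · rw [coeff_geom, if_pos (by have := ha i; omega)]
      norm_num

/-- The degree of `∏ (1 + t + ⋯ + t^(d_i - 1))` is at most `∑ d_i - #s`; the product vanishes if some
`d_i` is `0`, so the bound carries no truncated subtraction. -/
lemma degree_prod_geom {ι : Type*} (s : Finset ι) (d : ι → ℕ) (k : ℕ)
    (h : PowerSeries.coeff k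
      (∏ i ∈ s, ∑ j ∈ Finset.range (d i), (PowerSeries.X : PowerSeries ℤ) ^ j) ≠ 0) :
    k + s.card ≤ ∑ i ∈ s, d i := by
  classical
  induction s using Finset.induction_on generalizing k with
  | empty =>
    simp only [Finset.prod_empty, PowerSeries.coeff_one] at h
    simp at h ⊢
    exact h
  | insert i s hi ih =>
    rw [Finset.prod_insert hi, PowerSeries.coeff_mul] at h
    obtain ⟨⟨a, b⟩, hab, hne⟩ := Finset.exists_ne_zero_of_sum_ne_zero h
    have h1 := left_ne_zero_of_mul hne
    have h2 := ih b (right_ne_zero_of_mul hne)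
    rw [coeff_geom] at h1
    have h3 : a < d i := by by_contra hc; simp [hc] at h1
    rw [Finset.HasAntidiagonal.mem_antidiagonal] at hab
    rw [Finset.sum_insert hi, Finset.card_insert_of_notMem hi]
    simp only at hab
    omega

end PowerSeries

/-- Socle degree bound for a complete intersection: if `g_0, …, g_n` is a regular sequence of weighted
homogeneous elements of degrees `d_i`, then every weighted homogeneous element of degree greater
than `∑ d_i - ∑ α_i` lies in `(g_0, …, g_n)`.

The variables are a regular sequence too, so comparing the two Hilbert series eliminates that of `R`. -/
theorem mem_of_large_degree {K : Type*} [Field K] {n : ℕ}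
    {α : Fin (n + 1) → ℕ} (hα : ∀ i, 0 < α i)
    (g : Fin (n + 1) → MvPolynomial (Fin (n + 1)) K) (d : Fin (n + 1) → ℕ)
    (hg : ∀ i, (g i).IsWeightedHomogeneous α (d i))
    (hreg : ∀ i r, g i * r ∈ Ideal.span (g '' {j | j < i}) → r ∈ Ideal.span (g '' {j | j < i}))
    (k : ℕ) (hk : ∑ i, d i < k + ∑ i, α i)
    (r : MvPolynomial (Fin (n + 1)) K) (hr : r.IsWeightedHomogeneous α k) :
    r ∈ Ideal.span (Set.range g) := by
  refine mem_of_coeff_hilbertSeries_eq_zero α hα _ k ?_ r hr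
  by_contra hne
  have hH : PosAt (hilbertSeries α (Ideal.span (Set.range g))) k :=
    ⟨coeff_hilbertSeries_nonneg α hα _,
      lt_of_le_of_ne (coeff_hilbertSeries_nonneg α hα _ k) (Ne.symm hne)⟩
  have e1 := hilbertSeries_span_range hα g d hg hreg
  have e2 := hilbertSeries_span_range hα (X : Fin (n + 1) → MvPolynomial (Fin (n + 1)) K) α
    (fun i => isWeightedHomogeneous_X K α i) X_regular
  have hgeom : ∀ a : Fin (n + 1) → ℕ, ∏ i, (1 - (PowerSeries.X : PowerSeries ℤ) ^ a i) =
      (∏ i, ∑ j ∈ Finset.range (a i), (PowerSeries.X : PowerSeries ℤ) ^ j) *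
        (1 - PowerSeries.X) ^ (n + 1) := by
    intro a
    simp_rw [← geom_sum_mul_neg]
    rw [Finset.prod_mul_distrib]
    simp
  have h1X : (1 - PowerSeries.X : PowerSeries ℤ) ≠ 0 := by
    intro h
    have := congrArg (PowerSeries.coeff 0) h
    simp at this
  set c := PowerSeries.coeff 0 (hilbertSeries α (Ideal.span (Set.range
      (X : Fin (n + 1) → MvPolynomial (Fin (n + 1)) K)))) with hc
  have hvars : hilbertSeries α (Ideal.span (Set.range
      (X : Fin (n + 1) → MvPolynomial (Fin (n + 1)) K))) = PowerSeries.C c := by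
    ext j
    rw [PowerSeries.coeff_C]
    split_ifs with hj
    · rw [hj]
    · exact coeff_hilbertSeries_vars α hj
  have e3 : hilbertSeries α (Ideal.span (Set.range g)) *
      (∏ i, ∑ j ∈ Finset.range (α i), (PowerSeries.X : PowerSeries ℤ) ^ j) =
      PowerSeries.C c * ∏ i, ∑ j ∈ Finset.range (d i), (PowerSeries.X : PowerSeries ℤ) ^ j := by
    apply mul_right_cancel₀ (pow_ne_zero (n + 1) h1X)
    rw [mul_assoc, ← hgeom, mul_assoc, ← hgeom, ← hvars, e1, e2]
    ring
  have hpos := (hH.mul (posAt_prod_geom Finset.univ α hα)).2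
  rw [e3, PowerSeries.coeff_C_mul] at hpos
  have hdeg := degree_prod_geom Finset.univ d _ (right_ne_zero_of_mul hpos.ne')
  have hs : ∑ i, (α i - 1) + (n + 1) = ∑ i, α i := by
    have : ∑ i, ((α i - 1) + 1) = ∑ i, α i :=
      Finset.sum_congr rfl fun i _ => Nat.sub_add_cancel (hα i)
    rw [← this, Finset.sum_add_distrib]
    simp
  simp only [Finset.card_univ, Fintype.card_fin] at hdeg
  omega

/-- Weak regularity of the list `g_0, …, g_n`, spelled out with ideals. -/
lemma regular_of_isRegular {K : Type*} [Field K] {n : ℕ}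
    (g : Fin (n + 1) → MvPolynomial (Fin (n + 1)) K)
    (h : RingTheory.Sequence.IsWeaklyRegular (MvPolynomial (Fin (n + 1)) K)
      ((List.finRange (n + 1)).map g)) (i : Fin (n + 1)) (r : MvPolynomial (Fin (n + 1)) K)
    (hr : g i * r ∈ Ideal.span (g '' {j | j < i})) : r ∈ Ideal.span (g '' {j | j < i}) := by
  have hi := h.regular_mod_prev i (by simp only [List.length_map, List.length_finRange]; exact i.2)
  have hI : (Ideal.ofList (((List.finRange (n + 1)).map g).take i) • ⊤ :
      Submodule (MvPolynomial (Fin (n + 1)) K) (MvPolynomial (Fin (n + 1)) K)) =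
      Ideal.span (g '' {j | j < i}) := by
    rw [smul_eq_mul, Ideal.mul_top, Ideal.ofList]
    congr 1
    ext x
    simp only [Set.mem_ofPred_eq, List.mem_take_iff_getElem, Set.mem_image]
    constructor
    · rintro ⟨j, hj, rfl⟩
      simp only [List.length_map, List.length_finRange, lt_inf_iff] at hj
      exact ⟨⟨j, hj.2⟩, hj.1, by simp⟩
    · rintro ⟨j, hj, rfl⟩
      exact ⟨j, by simpa only [List.length_map, List.length_finRange, lt_inf_iff] using ⟨hj, j.2⟩, by simp⟩
  rw [hI] at hi
  rw [← Ideal.Quotient.eq_zero_iff_mem] at hr ⊢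
  apply hi
  simp only [List.getElem_map, List.getElem_finRange, smul_zero]
  exact hr

/-! ### Frobenius powers and the bound on `μ_f(p)` -/

lemma mem_frobeniusPower {K : Type*} [Field K] {n q : ℕ} (x : MvPolynomial (Fin (n + 1)) K) :
    x ∈ frobeniusPower K n q ↔ ∀ m ∈ x.support, ∃ i, q ≤ m i := by
  have h := mem_ideal_span_monomial_image (x := x)
    (s := Set.range fun i : Fin (n + 1) => Finsupp.single i q)
  rw [← Set.range_comp] at h
  have he : frobeniusPower K n q = Ideal.span (Set.range ((fun s => monomial s (1 : K)) ∘
      fun i : Fin (n + 1) => Finsupp.single i q)) := by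
    simp [frobeniusPower, Function.comp_def, X_pow_eq_monomial]
  rw [he, h]
  simp

/-- In characteristic `p` the ideal `m^{[p]}` is stable under `∂/∂x_i`, as `∂(x_j^p)/∂x_i = 0`. -/
lemma pderiv_mem_frobeniusPower {K : Type*} [Field K] {p : ℕ} [CharP K p] {n : ℕ}
    (i : Fin (n + 1)) {x : MvPolynomial (Fin (n + 1)) K} (hx : x ∈ frobeniusPower K n p) :
    pderiv i x ∈ frobeniusPower K n p := by
  induction hx using Submodule.span_induction with
  | mem x h =>
    obtain ⟨j, rfl⟩ := h
    simp
  | zero => simp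
  | add x y _ _ hx hy => rw [map_add]; exact add_mem hx hy
  | smul a x hxm hx =>
    rw [smul_eq_mul, Derivation.leibniz]
    exact add_mem (Ideal.mul_mem_left _ _ hx) (Ideal.mul_mem_right _ _ hxm)

/-- if `f` is quasi-homogeneous of type `α` of degree `w = α_0 + ⋯ + α_n`
with an isolated singularity, then `μ_f(p) = p − h` for an integer `0 ≤ h ≤ n − 1`. -/
theorem statement8 {K : Type*} [Field K] {p : ℕ} [Fact p.Prime] [CharP K p] {n : ℕ}
    (α : Fin (n + 1) → ℕ) (hα : ∀ i, 0 < α i) (w : ℕ) (hw : w = ∑ i, α i)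
    (f : MvPolynomial (Fin (n + 1)) K)
    (hf : f.IsWeightedHomogeneous α w)
    (hsing : HasIsolatedSingularity f) :
    ∃ h : ℕ, h ≤ n - 1 ∧ muF f p + h = p := by
  have hp : p.Prime := Fact.out
  have hwα : ∀ i, α i ≤ w := fun i => hw ▸ Finset.single_le_sum (by simp) (Finset.mem_univ i)
  have hwpos : 0 < w := (hα 0).trans_le (hwα 0)
  have hfp : f ^ p ∈ frobeniusPower K n p := by
    have h := Ideal.mem_map_of_mem (frobenius (MvPolynomial (Fin (n + 1)) K) p)
      (mem_span_X hwpos.ne' hf)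
    rw [Ideal.map_span, ← Set.range_comp] at h
    exact h
  have hle : muF f p ≤ p := Nat.sInf_le hfp
  have hmem : f ^ muF f p ∈ frobeniusPower K n p :=
    Nat.sInf_mem (s := {k : ℕ | f ^ k ∈ frobeniusPower K n p}) ⟨p, hfp⟩
  have hmu0 : muF f p ≠ 0 := by
    intro h0
    rw [h0, pow_zero, mem_frobeniusPower] at hmem
    obtain ⟨i, hi⟩ := hmem 0 (by simp)
    exact hp.ne_zero (by simpa using hi)
  rcases hle.eq_or_lt with heq | hlt
  · exact ⟨0, by omega, by omega⟩
  obtain ⟨e, he⟩ := Nat.exists_eq_succ_of_ne_zero hmu0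
  have hnot : f ^ e ∉ frobeniusPower K n p :=
    Nat.notMem_of_lt_sInf (s := {k : ℕ | f ^ k ∈ frobeniusPower K n p})
      (show e < muF f p by omega)
  -- Differentiating `f ^ (e + 1) ∈ m^{[p]}` and dividing by `e + 1`, which is invertible as
  -- `e + 1 = μ_f(p) < p`.
  have hJ : ∀ x ∈ Ideal.span (Set.range fun i => pderiv i f), x * f ^ e ∈ frobeniusPower K n p := by
    intro x hx
    induction hx using Submodule.span_induction with
    | mem x h =>
      obtain ⟨i, rfl⟩ := h
      have hd := pderiv_mem_frobeniusPower i hmem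
      rw [he, Derivation.leibniz_pow, Nat.succ_sub_one, ← Nat.cast_smul_eq_nsmul K] at hd
      have hunit : ((e.succ : ℕ) : K) ≠ 0 := by
        rw [Ne, CharP.cast_eq_zero_iff K p]
        exact fun hdvd => absurd (Nat.le_of_dvd e.succ_pos hdvd) (by omega)
      have hd' := Submodule.smul_of_tower_mem (frobeniusPower K n p) ((e.succ : K)⁻¹) hd
      rw [inv_smul_smul₀ hunit, smul_eq_mul] at hd'
      rwa [mul_comm]
    | zero => simp
    | add x y _ _ hx hy => rw [add_mul]; exact add_mem hx hy
    | smul a x _ hx => rw [smul_eq_mul, mul_assoc]; exact Ideal.mul_mem_left _ _ hx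
  have hlarge := mem_of_large_degree hα (fun i => pderiv i f) (fun i => w - α i)
    (fun i => hf.pderiv (Nat.sub_add_cancel (hwα i)))
    (regular_of_isRegular _ hsing.toIsWeaklyRegular)
  have hsumd : ∑ i, (w - α i) + w = (n + 1) * w := by
    have h1 : ∑ i, (w - α i + α i) = ∑ _i : Fin (n + 1), w :=
      Finset.sum_congr rfl fun i _ => Nat.sub_add_cancel (hwα i)
    rw [Finset.sum_add_distrib, ← hw] at h1
    simpa using h1
  rw [mem_frobeniusPower] at hnot
  push Not at hnot
  obtain ⟨m, hm, hmp⟩ := hnot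
  have hmw := (hf.pow e) (mem_support_iff.mp hm)
  -- The monomial `x^t` complementary to `x^m` in the socle generator `(x_0 ⋯ x_n)^(p-1)`.
  let t : Fin (n + 1) →₀ ℕ := Finsupp.equivFunOnFinite.symm fun i => p - 1 - m i
  have ht : ∀ i, (t + m) i = p - 1 := fun i => by
    have := hmp i
    simp only [t, Finsupp.add_apply, Finsupp.equivFunOnFinite_symm_apply_apply]
    omega
  have htw : Finsupp.weight α t + e * w = (p - 1) * w := by
    rw [← smul_eq_mul e w, ← hmw, ← map_add, Finsupp.weight_apply,
      Finsupp.sum_fintype _ _ (by simp)]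
    simp only [ht, smul_eq_mul]
    rw [← Finset.mul_sum, ← hw]
  refine ⟨p - muF f p, ?_, by omega⟩
  by_contra hcon
  have hdeg : ∑ i, (w - α i) < Finsupp.weight α t + ∑ i, α i := by
    have h2 : (n + 1 + e) * w < (p + 1) * w := Nat.mul_lt_mul_of_pos_right (by omega) hwpos
    have h3 : (p - 1) * w + w = p * w := by
      rw [← Nat.succ_mul]
      congr 1
      have := hp.pos
      omega
    rw [← hw]
    nlinarith
  -- `x^t` lies in the Jacobian ideal, yet `x^t * f ^ e` contains `(x_0 ⋯ x_n)^(p-1)`.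
  have hr := hJ _ (hlarge _ hdeg (monomial t 1) (isWeightedHomogeneous_monomial α t 1 rfl))
  rw [mem_frobeniusPower] at hr
  obtain ⟨i, hi⟩ := hr (t + m) (by
    rw [mem_support_iff, coeff_monomial_mul, one_mul]
    exact mem_support_iff.mp hm)
  rw [ht i] at hi
  have := hp.pos
  omega
end
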